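/- arXiv:2505.19654 — 2 statements merged into one kernel-verified Lean document; each statement's English description precedes it below -/
import Mathlib

section
/- Let d ≥ 3 and r ≥ 1 be integers and let k₁, …, k_r be positive integers with 1/k₁ + ⋯ + 1/k_r < 1. There is a constant c > 0 depending only on d, r, k₁, …, k_r such that the following holds for all sufficiently large primes p. Let ω ∈ F_{p^d} be such that 1, ω, …, ω^{d−1} form an F_p-basis of F_{p^d}, let 0 < σ < 11/16 be real, set Q = {x₀ + x₁ω + ⋯ + x_{d−2}ω^{d−2} : x_i integers in [1, p^σ]}, Q₀ = {y₀ + y₁ω : y₀, y₁ integers in [1, p^{9/20 − σ/5}]}, and let I_s = [1, p^{1/k_s}] for s = 1, …, r, viewed as subsets of F_{p^d}. Then E(I₁, I₂, …, I_r, Q, Q₀) ≤ exp(c · log p / log log p) · |Q| · |Q₀| · ∏_{s=1}^{r} |I_s|^{(19 − 4σ)/10}. -/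
open Finset
set_option linter.unusedSectionVars false

lemma aux_holder {X : Type*} [Fintype X] {r : ℕ} (k : Fin r → ℕ) (hk : ∀ s, 0 < k s)
    (hks : ∑ s, (1 : ℝ) / (k s) ≤ 1) (W : X → ℝ) (hW : ∀ x, 0 ≤ W x)
    (u : Fin r → X → ℝ) (hu : ∀ s x, 0 ≤ u s x) (B : Fin r → ℝ) (hB : ∀ s, 0 < B s)
    (B0 : ℝ) (hB0 : 0 < B0) (h0 : ∑ x, W x ≤ B0)
    (h : ∀ s, ∑ x, W x * u s x ^ (k s) ≤ B s) :
    ∑ x, W x * ∏ s, u s x ≤ (∏ s, B s ^ ((1 : ℝ) / (k s))) * B0 ^ (1 - ∑ s, (1 : ℝ) / (k s)) := by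
  set w0 : ℝ := 1 - ∑ s, (1 : ℝ) / (k s) with hw0
  have hw0n : 0 ≤ w0 := by linarith
  set R : ℝ := (∏ s, B s ^ ((1 : ℝ) / (k s))) * B0 ^ w0 with hR
  have hRpos : 0 < R := by
    apply mul_pos (Finset.prod_pos fun s _ => Real.rpow_pos_of_pos (hB s) _)
      (Real.rpow_pos_of_pos hB0 _)
  have key : ∀ x, ∏ s, u s x ≤ R * (∑ s, (1 : ℝ) / (k s) * (u s x ^ (k s) / B s) + w0 * (1 / B0)) := by
    intro x
    have := Real.geom_mean_le_arith_mean_weighted (Finset.univ : Finset (Option (Fin r)))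
      (fun o => o.elim w0 (fun s => (1 : ℝ) / (k s)))
      (fun o => o.elim (1 / B0) (fun s => u s x ^ (k s) / B s))
      (by rintro (_ | s) _
          · exact hw0n
          · simp)
      (by rw [Fintype.sum_option]; simp [hw0])
      (by rintro (_ | s) _
          · simp [hB0.le]
          · exact div_nonneg (pow_nonneg (hu s x) _) (hB s).le)
    rw [Fintype.sum_option, Fintype.prod_option] at this
    simp only [Option.elim] at this
    have e : (1 / B0) ^ w0 * ∏ s, (u s x ^ k s / B s) ^ ((1 : ℝ) / (k s)) = (∏ s, u s x) / R := by
      have : ∀ s, (u s x ^ k s / B s) ^ ((1 : ℝ) / (k s)) = u s x / B s ^ ((1 : ℝ) / (k s)) := by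
        intro s
        rw [Real.div_rpow (pow_nonneg (hu s x) _) (hB s).le, one_div,
          Real.pow_rpow_inv_natCast (hu s x) (hk s).ne']
      rw [Finset.prod_congr rfl fun s _ => this s, Finset.prod_div_distrib, hR,
        Real.div_rpow zero_le_one hB0.le, Real.one_rpow]
      rw [div_mul_div_comm, one_mul, mul_comm (B0 ^ w0)]
    rw [e, div_le_iff₀ hRpos] at this
    linarith
  calc ∑ x, W x * ∏ s, u s x ≤ ∑ x, W x * (R * (∑ s, (1 : ℝ) / (k s) * (u s x ^ (k s) / B s) + w0 * (1 / B0))) :=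
        Finset.sum_le_sum fun x _ => mul_le_mul_of_nonneg_left (key x) (hW x)
    _ = R * (∑ s, (1 : ℝ) / (k s) * ((∑ x, W x * u s x ^ (k s)) / B s) + w0 * ((∑ x, W x) / B0)) := by
        simp only [Finset.sum_div, Finset.mul_sum, mul_add, Finset.sum_add_distrib]
        congr 1
        · rw [Finset.sum_comm]
          refine Finset.sum_congr rfl fun s _ => Finset.sum_congr rfl fun x _ => ?_
          ring
        · refine Finset.sum_congr rfl fun x _ => ?_
          ring
    _ ≤ R * (∑ s, (1 : ℝ) / (k s) * 1 + w0 * 1) := by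
        apply mul_le_mul_of_nonneg_left _ hRpos.le
        apply add_le_add
        · refine Finset.sum_le_sum fun s _ => mul_le_mul_of_nonneg_left ?_ (by positivity)
          rw [div_le_one (hB s)]; exact h s
        · refine mul_le_mul_of_nonneg_left ?_ hw0n
          rw [div_le_one hB0]; exact h0
    _ = R := by simp [hw0]

section chars
variable {F : Type} [Field F] [Fintype F]

noncomputable instance auxFintypeMulChar : Fintype (MulChar F ℂ) := Fintype.ofFinite _

lemma aux_orth {a : F} (ha : a ≠ 1) : ∑ χ : MulChar F ℂ, χ a = 0 := by
  obtain ⟨χ, hχ⟩ := MulChar.exists_apply_ne_one_of_hasEnoughRootsOfUnity F ℂ ha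
  refine eq_zero_of_mul_eq_self_left hχ ?_
  simp only [Finset.mul_sum, ← MulChar.mul_apply]
  exact Fintype.sum_bijective _ (Group.mulLeft_bijective χ) _ _ fun χ' ↦ rfl

lemma aux_energy {ι : Type*} [DecidableEq F] (X : Finset ι) (φ : ι → F) (hφ : ∀ x ∈ X, φ x ≠ 0) :
    (#{t ∈ X ×ˢ X | φ t.1 = φ t.2} : ℝ) * (Fintype.card (MulChar F ℂ))
      = ∑ χ : MulChar F ℂ, ‖∑ x ∈ X, χ (φ x)‖ ^ 2 := by
  have h1 : ∀ χ : MulChar F ℂ, ((‖∑ x ∈ X, χ (φ x)‖ ^ 2 : ℝ) : ℂ)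
      = ∑ t ∈ X ×ˢ X, χ (φ t.1 * (φ t.2)⁻¹) := by
    intro χ
    rw [← Complex.normSq_eq_norm_sq, ← Complex.mul_conj, map_sum, Finset.sum_mul_sum,
      Finset.sum_product]
    refine Finset.sum_congr rfl fun x _ => Finset.sum_congr rfl fun y hy => ?_
    rw [map_mul, ← MulChar.inv_apply', ← MulChar.star_apply']
    rfl
  have : ((∑ χ : MulChar F ℂ, ‖∑ x ∈ X, χ (φ x)‖ ^ 2 : ℝ) : ℂ)
      = ((#{t ∈ X ×ˢ X | φ t.1 = φ t.2} : ℝ) * (Fintype.card (MulChar F ℂ)) : ℝ) := by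
    rw [Complex.ofReal_sum, Finset.sum_congr rfl fun χ _ => h1 χ, Finset.sum_comm]
    have : ∀ t ∈ X ×ˢ X, ∑ χ : MulChar F ℂ, χ (φ t.1 * (φ t.2)⁻¹)
        = if φ t.1 = φ t.2 then (Fintype.card (MulChar F ℂ) : ℂ) else 0 := by
      intro t ht
      rw [Finset.mem_product] at ht
      split_ifs with h
      · rw [h, mul_inv_cancel₀ (hφ _ ht.2)]; simp
      · apply aux_orth
        intro h'
        exact h ((mul_inv_eq_one₀ (hφ _ ht.2)).1 h')
    rw [Finset.sum_congr rfl this, ← Finset.sum_filter]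
    simp
  exact_mod_cast this.symm

lemma aux_sum_factor {ι : Type*} {r : ℕ} (A : Fin r → Finset ℕ) (Y : Finset ι) (h : ι → F)
    (χ : MulChar F ℂ) :
    ‖∑ x ∈ Fintype.piFinset A ×ˢ Y, χ ((∏ s, (x.1 s : F)) * h x.2)‖ ^ 2
      = ‖∑ y ∈ Y, χ (h y)‖ ^ 2 * ∏ s, ‖∑ a ∈ A s, χ (a : F)‖ ^ 2 := by
  have : ∑ x ∈ Fintype.piFinset A ×ˢ Y, χ ((∏ s, (x.1 s : F)) * h x.2)
      = (∏ s, ∑ a ∈ A s, χ (a : F)) * ∑ y ∈ Y, χ (h y) := by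
    rw [Finset.prod_univ_sum, Finset.sum_mul_sum, Finset.sum_product]
    simp [map_mul, map_prod]
  rw [this, norm_mul, norm_prod, mul_pow, Finset.prod_pow, mul_comm]

theorem aux_energy_holder {ι : Type*} [DecidableEq F] {r : ℕ} (k : Fin r → ℕ) (hk : ∀ s, 0 < k s)
    (hks : ∑ s, (1 : ℝ) / (k s) ≤ 1) (A : Fin r → Finset ℕ) (hA : ∀ s, ∀ a ∈ A s, (a : F) ≠ 0)
    (Y : Finset ι) (h : ι → F) (hY : ∀ y ∈ Y, h y ≠ 0)
    (B : Fin r → ℝ) (hB : ∀ s, 0 < B s) (B0 : ℝ) (hB0 : 0 < B0)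
    (h0 : (#{t ∈ Y ×ˢ Y | h t.1 = h t.2} : ℝ) ≤ B0)
    (hE : ∀ s, (#{t ∈ (Fintype.piFinset (fun _ : Fin (k s) => A s) ×ˢ Y) ×ˢ
        (Fintype.piFinset (fun _ : Fin (k s) => A s) ×ˢ Y) |
        (∏ j, (t.1.1 j : F)) * h t.1.2 = (∏ j, (t.2.1 j : F)) * h t.2.2} : ℝ) ≤ B s) :
    (#{t ∈ (Fintype.piFinset A ×ˢ Y) ×ˢ (Fintype.piFinset A ×ˢ Y) |
        (∏ j, (t.1.1 j : F)) * h t.1.2 = (∏ j, (t.2.1 j : F)) * h t.2.2} : ℝ)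
      ≤ (∏ s, B s ^ ((1 : ℝ) / (k s))) * B0 ^ (1 - ∑ s, (1 : ℝ) / (k s)) := by
  have hnz : ∀ {n : ℕ} (A : Fin n → Finset ℕ) (_ : ∀ s, ∀ a ∈ A s, (a : F) ≠ 0),
      ∀ x ∈ Fintype.piFinset A ×ˢ Y, (∏ s, (x.1 s : F)) * h x.2 ≠ 0 := by
    intro n A hA x hx
    rw [Finset.mem_product, Fintype.mem_piFinset] at hx
    exact mul_ne_zero (Finset.prod_ne_zero_iff.2 fun s _ => hA s _ (hx.1 s)) (hY _ hx.2)
  set C : ℝ := (Fintype.card (MulChar F ℂ) : ℝ) with hC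
  have hCpos : 0 < C := by
    rw [hC]; exact_mod_cast Fintype.card_pos
  have e1 := aux_energy (Fintype.piFinset A ×ˢ Y) (fun x => (∏ s, (x.1 s : F)) * h x.2) (hnz A hA)
  have e0 := aux_energy Y h hY
  have es := fun s => aux_energy (Fintype.piFinset (fun _ : Fin (k s) => A s) ×ˢ Y)
    (fun x => (∏ s, (x.1 s : F)) * h x.2) (hnz _ (fun _ => hA s))
  simp only [aux_sum_factor] at e1 es
  rw [← hC] at e1 e0
  have main := aux_holder k hk hks (fun χ : MulChar F ℂ => ‖∑ y ∈ Y, χ (h y)‖ ^ 2 / C)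
    (fun χ => by positivity) (fun s χ => ‖∑ a ∈ A s, χ (a : F)‖ ^ 2) (fun s χ => by positivity)
    B hB B0 hB0 (by rw [← Finset.sum_div, ← e0, mul_div_cancel_right₀ _ hCpos.ne']; exact h0)
    (by
      intro s
      have := es s
      simp only [Finset.prod_const, Finset.card_univ, Fintype.card_fin] at this
      rw [← hC] at this
      simp only [div_mul_eq_mul_div]
      rw [← Finset.sum_div, ← this, mul_div_cancel_right₀ _ hCpos.ne']
      exact hE s)
  simp only [div_mul_eq_mul_div] at main
  rw [← Finset.sum_div, ← e1, mul_div_cancel_right₀ _ hCpos.ne'] at main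
  exact main
end chars

lemma aux_divisors (L : ℝ) (hL : 4 ≤ L) (n : ℕ) (hn : n ≠ 0) (hnL : Real.log n ≤ 2 * L) :
    (#n.divisors : ℝ) ≤ Real.exp (40 * L / Real.log L) := by
  have hl2 := Real.log_two_gt_d9
  have hl2' := Real.log_two_lt_d9
  have hlogL : 0 < Real.log L := Real.log_pos (by linarith)
  have hnpos : (0 : ℝ) < n := by exact_mod_cast Nat.pos_of_ne_zero hn
  set y := Real.sqrt L with hy
  have hlogy : Real.log y = Real.log L / 2 := by rw [hy, Real.log_sqrt (by linarith)]
  have hypos : 0 < y := Real.sqrt_pos.2 (by linarith)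
  set δ := Real.log 2 / Real.log y with hδ
  have hδpos : 0 < δ := by rw [hδ, hlogy]; positivity
  have hyδ : y ^ δ = 2 := by
    rw [Real.rpow_def_of_pos hypos, hδ, mul_div_cancel₀ _ (by rw [hlogy]; positivity),
      Real.exp_log (by norm_num)]
  rw [Nat.card_divisors hn]
  push_cast
  set S := n.primeFactors.filter (fun q : ℕ => (q : ℝ) ≤ y) with hS
  have hbound : ∀ q ∈ n.primeFactors, ((n.factorization q : ℝ) + 1) ≤
      (if (q : ℝ) ≤ y then L ^ 2 else 1) * ((q : ℝ) ^ (n.factorization q)) ^ δ := by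
    intro q hq
    have hqp := Nat.prime_of_mem_primeFactors hq
    have hq2 : (2 : ℝ) ≤ q := by exact_mod_cast hqp.two_le
    set e := n.factorization q with he
    have hqe : (1 : ℝ) ≤ (q : ℝ) ^ e := one_le_pow₀ (by linarith)
    split_ifs with hqy
    · have h1 : (1 : ℝ) ≤ ((q : ℝ) ^ e) ^ δ := Real.one_le_rpow hqe hδpos.le
      have h2 : (2 : ℝ) ^ e ≤ n := by
        have : q ^ e ≤ n := Nat.ordProj_le q hn
        calc (2 : ℝ) ^ e ≤ (q : ℝ) ^ e := pow_le_pow_left₀ (by norm_num) hq2 _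
          _ ≤ n := by exact_mod_cast this
      have h3 : (e : ℝ) * Real.log 2 ≤ 2 * L := by
        have := Real.log_le_log (by positivity) h2
        rw [Real.log_pow] at this
        linarith
      have h4 : (e : ℝ) + 1 ≤ L ^ 2 := by nlinarith
      calc (e : ℝ) + 1 ≤ L ^ 2 * 1 := by linarith
        _ ≤ _ := by gcongr
    · push Not at hqy
      rw [one_mul]
      calc (e : ℝ) + 1 ≤ 2 ^ e := by exact_mod_cast Nat.lt_two_pow_self (n := e)
        _ = (y ^ δ) ^ e := by rw [hyδ]
        _ ≤ ((q : ℝ) ^ δ) ^ e := by gcongr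
        _ = _ := by
          rw [← Real.rpow_natCast, ← Real.rpow_natCast, ← Real.rpow_mul (by linarith),
            ← Real.rpow_mul (by linarith), mul_comm]
  calc ∏ q ∈ n.primeFactors, ((n.factorization q : ℝ) + 1)
      ≤ ∏ q ∈ n.primeFactors, ((if (q : ℝ) ≤ y then L ^ 2 else 1) * ((q : ℝ) ^ (n.factorization q)) ^ δ) :=
        Finset.prod_le_prod (fun q _ => by positivity) hbound
    _ = (L ^ 2) ^ (#S) * (n : ℝ) ^ δ := by
        rw [Finset.prod_mul_distrib, ← Finset.prod_filter, Finset.prod_const,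
          Real.finsetProd_rpow _ _ (fun q _ => by positivity)]
        congr 2
        have := Nat.prod_factorization_pow_eq_self hn
        rw [Finsupp.prod, Nat.support_factorization] at this
        exact_mod_cast this
    _ ≤ Real.exp (2 * Real.log L * y) * Real.exp (2 * L * δ) := by
        apply mul_le_mul _ _ (by positivity) (by positivity)
        · have hc : (#S : ℝ) ≤ y := by
            have : S ⊆ Finset.Icc 1 ⌊y⌋₊ := by
              intro q hq
              rw [hS, Finset.mem_filter] at hq
              rw [Finset.mem_Icc]
              exact ⟨(Nat.prime_of_mem_primeFactors hq.1).one_lt.le, Nat.le_floor hq.2⟩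
            have := Finset.card_le_card this
            rw [Nat.card_Icc] at this
            calc (#S : ℝ) ≤ (⌊y⌋₊ : ℝ) := by exact_mod_cast this
              _ ≤ y := Nat.floor_le hypos.le
          rw [← Real.rpow_natCast, Real.rpow_def_of_pos (by positivity), Real.log_pow]
          apply Real.exp_le_exp.2
          push_cast
          gcongr
        · rw [Real.rpow_def_of_pos hnpos]
          apply Real.exp_le_exp.2
          gcongr
    _ ≤ _ := by
        rw [← Real.exp_add]
        apply Real.exp_le_exp.2
        rw [hδ, hlogy, le_div_iff₀ hlogL]
        have hq : Real.log L ≤ 4 * L ^ ((1 : ℝ) / 4) := by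
          have := Real.log_le_rpow_div (x := L) (by linarith) (ε := 1/4) (by norm_num)
          linarith
        have hq2 : Real.log L ^ 2 ≤ 16 * y := by
          have : (L ^ ((1 : ℝ) / 4)) ^ 2 = y := by
            rw [hy, Real.sqrt_eq_rpow, ← Real.rpow_natCast, ← Real.rpow_mul (by linarith)]
            norm_num
          calc Real.log L ^ 2 ≤ (4 * L ^ ((1 : ℝ) / 4)) ^ 2 := by gcongr
            _ = 16 * y := by rw [mul_pow, this]; norm_num
        have hyy : y * y = L := Real.mul_self_sqrt (by linarith)
        have e : 2 * L * (Real.log 2 / (Real.log L / 2)) * Real.log L = 4 * L * Real.log 2 := by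
          field_simp; ring
        rw [add_mul, e]
        nlinarith [mul_le_mul_of_nonneg_left hq2 hypos.le]

section poly
open Polynomial
variable {p : ℕ} [Fact p.Prime]

/-- polynomial attached to a coefficient vector -/
noncomputable def auxQ (p : ℕ) {D : ℕ} (x : Fin D → ℕ) : (ZMod p)[X] :=
  ∑ i, C (x i : ZMod p) * X ^ (i : ℕ)

/-- linear polynomial attached to a pair -/
noncomputable def auxL (p : ℕ) (y : ℕ × ℕ) : (ZMod p)[X] :=
  C (y.1 : ZMod p) + C (y.2 : ZMod p) * X

/-- the box of coefficient vectors -/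
def auxBox (N D : ℕ) : Finset (Fin D → ℕ) := Fintype.piFinset fun _ => Finset.Icc 1 N

/-- the box of pairs -/
def auxPair (M : ℕ) : Finset (ℕ × ℕ) := Finset.Icc 1 M ×ˢ Finset.Icc 1 M

lemma auxBox_card (N D : ℕ) : #(auxBox N D) = N ^ D := by
  simp [auxBox]

lemma auxPair_card (M : ℕ) : #(auxPair M) = M * M := by
  simp [auxPair]

lemma auxQ_coeff {D : ℕ} (x : Fin D → ℕ) (i : Fin D) : (auxQ p x).coeff i = (x i : ZMod p) := by
  rw [auxQ, finsetSum_coeff, Finset.sum_eq_single i]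
  · simp
  · intro j _ hj
    rw [coeff_C_mul, coeff_X_pow, if_neg, mul_zero]
    exact fun h => hj (Fin.ext h.symm)
  · simp

lemma auxQ_natDegree {m : ℕ} (x : Fin (m + 1) → ℕ) : (auxQ p x).natDegree ≤ m := by
  rw [auxQ]
  apply natDegree_sum_le_of_forall_le
  intro i _
  exact (natDegree_C_mul_X_pow_le _ _).trans (by have := i.2; omega)

lemma auxL_natDegree (y : ℕ × ℕ) : (auxL p y).natDegree ≤ 1 := by
  rw [auxL]
  compute_degree

lemma aux_cast_inj {a b : ℕ} (ha : a < p) (hb : b < p) (h : (a : ZMod p) = b) : a = b := by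
  rw [ZMod.natCast_eq_natCast_iff'] at h
  rwa [Nat.mod_eq_of_lt ha, Nat.mod_eq_of_lt hb] at h

lemma aux_cast_ne {a M : ℕ} (ha : a ∈ Finset.Icc 1 M) (hM : M < p) : (a : ZMod p) ≠ 0 := by
  rw [Finset.mem_Icc] at ha
  intro h
  rw [ZMod.natCast_eq_zero_iff] at h
  have := Nat.le_of_dvd (by omega) h
  omega

lemma auxQ_inj {N D : ℕ} (hN : N < p) {x x' : Fin D → ℕ} (hx : x ∈ auxBox N D)
    (hx' : x' ∈ auxBox N D) (h : auxQ p x = auxQ p x') : x = x' := by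
  funext i
  rw [auxBox, Fintype.mem_piFinset] at hx hx'
  have h1 := hx i; have h2 := hx' i
  rw [Finset.mem_Icc] at h1 h2
  apply aux_cast_inj (p := p) (by omega) (by omega)
  rw [← auxQ_coeff, ← auxQ_coeff, h]

lemma auxQ_ne {N D : ℕ} (hN : N < p) {x : Fin (D + 1) → ℕ} (hx : x ∈ auxBox N (D + 1)) :
    auxQ p x ≠ 0 := by
  intro h
  rw [auxBox, Fintype.mem_piFinset] at hx
  apply aux_cast_ne (hx 0) hN
  rw [← auxQ_coeff, h, coeff_zero]

lemma auxL_ne {M : ℕ} (hM : M < p) {y : ℕ × ℕ} (hy : y ∈ auxPair M) : auxL p y ≠ 0 := by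
  intro h
  rw [auxPair, Finset.mem_product] at hy
  apply aux_cast_ne hy.2 hM
  have := congrArg (fun q => coeff q 1) h
  simpa [auxL] using this

lemma auxL_eq {M : ℕ} (hM : M < p) {y : ℕ × ℕ} (hy : y ∈ auxPair M) :
    auxL p y = C (y.2 : ZMod p) * (X - C (-(y.1 : ZMod p) / y.2)) := by
  rw [auxPair, Finset.mem_product] at hy
  have := aux_cast_ne hy.2 hM
  rw [mul_sub, ← C_mul, mul_div_cancel₀ _ this, auxL, C_neg]
  ring

lemma aux_countA_fiber {N M m T : ℕ} (hNM : N * M < p) (hN : N < p) (hM : M < p)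
    (hT : ∀ n, n ≠ 0 → n ≤ p ^ 2 → #n.divisors ≤ T) (z : (ZMod p)[X]) (hz : z ≠ 0)
    (hzd : z.natDegree ≤ m + 2) :
    #{c ∈ auxBox N (m + 2) ×ˢ auxPair M | auxQ p c.1 * auxL p c.2 = z} ≤ T * (m + 2) := by
  have hroots : #z.roots.toFinset ≤ m + 2 :=
    (Multiset.toFinset_card_le _).trans ((card_roots' z).trans hzd)
  refine le_trans (Finset.card_le_mul_card_image_of_maps_to
    (f := fun c => (-(c.2.1 : ZMod p) / c.2.2)) (t := z.roots.toFinset) ?_ T ?_)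
    (Nat.mul_le_mul_left _ hroots)
  · intro c hc
    rw [Finset.mem_filter, Finset.mem_product] at hc
    rw [Multiset.mem_toFinset, mem_roots hz, ← hc.2, auxL_eq hM hc.1.2]
    simp [IsRoot]
  · intro ρ _
    rcases Finset.eq_empty_or_nonempty
      (((auxBox N (m + 2) ×ˢ auxPair M).filter (fun c => auxQ p c.1 * auxL p c.2 = z)).filter
        (fun c => (-(c.2.1 : ZMod p) / c.2.2) = ρ)) with he | ⟨c0, hc0⟩
    · rw [he]; simp
    have key : ∀ c ∈ ((auxBox N (m + 2) ×ˢ auxPair M).filter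
        (fun c => auxQ p c.1 * auxL p c.2 = z)).filter (fun c => (-(c.2.1 : ZMod p) / c.2.2) = ρ),
        C (c.2.2 : ZMod p) * auxQ p c.1 * (X - C ρ) = z := by
      intro c hc
      rw [Finset.mem_filter, Finset.mem_filter, Finset.mem_product] at hc
      rw [← hc.1.2, auxL_eq hM hc.1.1.2, hc.2]
      ring
    have hx : ∀ c ∈ ((auxBox N (m + 2) ×ˢ auxPair M).filter
        (fun c => auxQ p c.1 * auxL p c.2 = z)).filter (fun c => (-(c.2.1 : ZMod p) / c.2.2) = ρ),
        c.1 ∈ auxBox N (m + 2) ∧ c.2.1 ∈ Finset.Icc 1 M ∧ c.2.2 ∈ Finset.Icc 1 M ∧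
          c.1 0 ∈ Finset.Icc 1 N ∧ -(c.2.1 : ZMod p) = ρ * c.2.2 := by
      intro c hc
      rw [Finset.mem_filter, Finset.mem_filter, Finset.mem_product] at hc
      have h2 := hc.1.1.2
      rw [auxPair, Finset.mem_product] at h2
      refine ⟨hc.1.1.1, h2.1, h2.2, ?_, ?_⟩
      · have := hc.1.1.1
        rw [auxBox, Fintype.mem_piFinset] at this
        exact this 0
      · rw [← hc.2, div_mul_cancel₀ _ (aux_cast_ne h2.2 hM)]
    have hprod : ∀ c ∈ ((auxBox N (m + 2) ×ˢ auxPair M).filter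
        (fun c => auxQ p c.1 * auxL p c.2 = z)).filter (fun c => (-(c.2.1 : ZMod p) / c.2.2) = ρ),
        C (c.2.2 : ZMod p) * auxQ p c.1 = C (c0.2.2 : ZMod p) * auxQ p c0.1 := by
      intro c hc
      exact mul_right_cancel₀ (X_sub_C_ne_zero ρ) ((key c hc).trans (key c0 hc0).symm)
    have hlt : ∀ a ∈ Finset.Icc 1 M, ∀ b ∈ Finset.Icc 1 N, 0 < a * b ∧ a * b < p := by
      intro a ha b hb
      rw [Finset.mem_Icc] at ha hb
      refine ⟨Nat.mul_pos ha.1 hb.1, lt_of_le_of_lt ?_ hNM⟩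
      rw [mul_comm N M]
      exact Nat.mul_le_mul ha.2 hb.2
    have h0 := hx c0 hc0
    have hl0 := hlt _ h0.2.2.1 _ h0.2.2.2.1
    refine le_trans ?_ (hT (c0.2.2 * c0.1 0) hl0.1.ne' (by nlinarith))
    apply Finset.card_le_card_of_injOn (fun c => c.2.2)
    · intro c hc
      have h1 := hx c hc
      have hl1 := hlt _ h1.2.2.1 _ h1.2.2.2.1
      rw [Finset.mem_coe, Nat.mem_divisors]
      refine ⟨?_, hl0.1.ne'⟩
      have : c.2.2 * c.1 0 = c0.2.2 * c0.1 0 := by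
        apply aux_cast_inj (p := p) hl1.2 hl0.2
        have := congrArg (fun q => coeff q ((0 : Fin (m + 2)) : ℕ)) (hprod c hc)
        simp only [coeff_C_mul, auxQ_coeff] at this
        push_cast
        exact this
      exact ⟨_, this.symm⟩
    · intro c hc c' hc' hcc
      simp only at hcc
      have h1 := hx c hc
      have h2 := hx c' hc'
      have e1 : auxQ p c.1 = auxQ p c'.1 := by
        have := (hprod c hc).trans (hprod c' hc').symm
        rw [hcc] at this
        exact mul_left_cancel₀ (C_ne_zero.2 (aux_cast_ne h2.2.2.1 hM)) this
      have e2 : c.2.1 = c'.2.1 := by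
        have a1 := h1.2.1
        have a2 := h2.2.1
        rw [Finset.mem_Icc] at a1 a2
        apply aux_cast_inj (p := p) (by omega) (by omega)
        have b1 := h1.2.2.2.2
        rw [hcc, ← h2.2.2.2.2] at b1
        exact neg_injective b1
      exact Prod.ext (auxQ_inj hN h1.1 h2.1 e1) (Prod.ext e2 hcc)

lemma aux_countA {N M m T : ℕ} (hNM : N * M < p) (hN : N < p) (hM : M < p)
    (hT : ∀ n, n ≠ 0 → n ≤ p ^ 2 → #n.divisors ≤ T) :
    #{t ∈ (auxBox N (m + 2) ×ˢ auxPair M) ×ˢ (auxBox N (m + 2) ×ˢ auxPair M) |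
      auxQ p t.1.1 * auxL p t.1.2 = auxQ p t.2.1 * auxL p t.2.2} ≤
      T * (m + 2) * (N ^ (m + 2) * (M * M)) := by
  rw [← auxBox_card N (m + 2), ← auxPair_card M, ← Finset.card_product]
  refine Finset.card_le_mul_card_image_of_maps_to (f := fun t => t.2) ?_ _ ?_
  · intro t ht
    rw [Finset.mem_filter, Finset.mem_product] at ht
    exact ht.1.2
  · intro c hc
    have hc' := hc
    rw [Finset.mem_product] at hc'
    refine le_trans ?_ (aux_countA_fiber (N := N) (M := M) (m := m) hNM hN hM hT
      (auxQ p c.1 * auxL p c.2) (mul_ne_zero (auxQ_ne hN hc'.1) (auxL_ne hM hc'.2)) ?_)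
    · apply Finset.card_le_card_of_injOn (fun t => t.1)
      · intro t ht
        simp only [Finset.coe_filter, Finset.mem_filter, Finset.mem_product, Set.mem_ofPred_eq] at ht ⊢
        exact ⟨ht.1.1.1, by rw [ht.1.2, ht.2]⟩
      · intro t ht t' ht' h
        simp only [Finset.coe_filter, Finset.mem_filter, Set.mem_ofPred_eq] at ht ht'
        exact Prod.ext h (ht.2.trans ht'.2.symm)
    · refine natDegree_mul_le.trans ?_
      have := auxQ_natDegree (p := p) c.1
      have := auxL_natDegree (p := p) c.2
      omega

lemma aux_countD {N T : ℕ} (hN : N < p)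
    (hT : ∀ n, n ≠ 0 → n ≤ p ^ 2 → #n.divisors ≤ T) :
    #{t ∈ auxPair N ×ˢ auxPair N | (t.1.1 : ZMod p) * t.2.2 = t.1.2 * t.2.1} ≤
      T * (N * N * (N * N / p + 1)) := by
  have hc : N * N * (N * N / p + 1) = #(auxPair N ×ˢ Finset.range (N * N / p + 1)) := by
    rw [Finset.card_product, auxPair_card, Finset.card_range]
  rw [hc]
  have hmem : ∀ t ∈ (auxPair N ×ˢ auxPair N).filter
      (fun t => (t.1.1 : ZMod p) * t.2.2 = t.1.2 * t.2.1),
      ((1 ≤ t.1.1 ∧ t.1.1 ≤ N) ∧ (1 ≤ t.1.2 ∧ t.1.2 ≤ N)) ∧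
      ((1 ≤ t.2.1 ∧ t.2.1 ≤ N) ∧ (1 ≤ t.2.2 ∧ t.2.2 ≤ N)) ∧
      (t.1.1 * t.2.2) % p = (t.1.2 * t.2.1) % p := by
    intro t ht
    rw [Finset.mem_filter] at ht
    obtain ⟨h1, h2⟩ := ht
    simp only [auxPair, Finset.mem_product, Finset.mem_Icc] at h1
    refine ⟨h1.1, h1.2, ?_⟩
    rw [← ZMod.natCast_eq_natCast_iff']
    push_cast
    exact h2
  refine Finset.card_le_mul_card_image_of_maps_to
    (f := fun t => ((t.1.2, t.2.1), t.1.1 * t.2.2 / p)) ?_ _ ?_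
  · intro t ht
    have := hmem t ht
    simp only [auxPair, Finset.mem_product, Finset.mem_Icc, Finset.mem_range]
    refine ⟨⟨this.1.2, this.2.1.1⟩, Nat.lt_succ_of_le (Nat.div_le_div_right ?_)⟩
    exact Nat.mul_le_mul this.1.1.2 this.2.1.2.2
  · intro b _
    rcases Finset.eq_empty_or_nonempty (((auxPair N ×ˢ auxPair N).filter
      (fun t => (t.1.1 : ZMod p) * t.2.2 = t.1.2 * t.2.1)).filter
      (fun t => ((t.1.2, t.2.1), t.1.1 * t.2.2 / p) = b)) with he | ⟨t0, ht0⟩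
    · rw [he]; simp
    have hprod : ∀ t ∈ ((auxPair N ×ˢ auxPair N).filter
      (fun t => (t.1.1 : ZMod p) * t.2.2 = t.1.2 * t.2.1)).filter
      (fun t => ((t.1.2, t.2.1), t.1.1 * t.2.2 / p) = b),
      t.1.1 * t.2.2 = t0.1.1 * t0.2.2 ∧ t.1.2 = t0.1.2 ∧ t.2.1 = t0.2.1 ∧ 0 < t.1.1 ∧
        0 < t.1.1 * t.2.2 ∧ t.1.1 * t.2.2 ≤ N * N := by
      intro t ht
      rw [Finset.mem_filter] at ht ht0
      have h1 := hmem t ht.1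
      have h0 := hmem t0 ht0.1
      have e := ht.2.trans ht0.2.symm
      simp only [Prod.mk.injEq] at e
      refine ⟨?_, e.1.1, e.1.2, h1.1.1.1, Nat.mul_pos h1.1.1.1 h1.2.1.2.1,
        Nat.mul_le_mul h1.1.1.2 h1.2.1.2.2⟩
      rw [← Nat.div_add_mod (t.1.1 * t.2.2) p, ← Nat.div_add_mod (t0.1.1 * t0.2.2) p, e.2,
        h1.2.2, h0.2.2, e.1.1, e.1.2]
    have h0 := hprod t0 ht0
    refine le_trans ?_ (hT (t0.1.1 * t0.2.2) h0.2.2.2.2.1.ne' (h0.2.2.2.2.2.trans (by nlinarith)))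
    apply Finset.card_le_card_of_injOn (fun t => t.1.1)
    · intro t ht
      rw [Finset.mem_coe, Nat.mem_divisors]
      exact ⟨⟨_, (hprod t ht).1.symm⟩, h0.2.2.2.2.1.ne'⟩
    · intro t ht t' ht' h
      simp only at h
      have h1 := hprod t ht
      have h2 := hprod t' ht'
      have e := h1.1.trans h2.1.symm
      rw [h] at e
      exact Prod.ext (Prod.ext h (h1.2.1.trans h2.2.1.symm))
        (Prod.ext (h1.2.2.1.trans h2.2.2.1.symm) (Nat.eq_of_mul_eq_mul_left h2.2.2.2.1 e))

lemma aux_countPar {N m T : ℕ} (hN : N < p)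
    (hT : ∀ n, n ≠ 0 → n ≤ p ^ 2 → #n.divisors ≤ T) :
    #{t ∈ auxBox N (m + 2) ×ˢ auxBox N (m + 2) |
      ∃ c : ZMod p, auxQ p t.1 = C c * auxQ p t.2} ≤
      N ^ m * (T * (N * N * (N * N / p + 1))) := by
  classical
  refine le_trans ?_ (Nat.mul_le_mul_left _ (aux_countD hN hT))
  have hmem : ∀ t ∈ (auxBox N (m + 2) ×ˢ auxBox N (m + 2)).filter
      (fun t => ∃ c : ZMod p, auxQ p t.1 = C c * auxQ p t.2),
      (∀ i, t.1 i ∈ Finset.Icc 1 N) ∧ (∀ i, t.2 i ∈ Finset.Icc 1 N) ∧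
      ∃ c : ZMod p, ∀ i, (t.1 i : ZMod p) = c * t.2 i := by
    intro t ht
    rw [Finset.mem_filter, Finset.mem_product, auxBox, Fintype.mem_piFinset,
      Fintype.mem_piFinset] at ht
    obtain ⟨⟨h1, h2⟩, c, hc⟩ := ht
    refine ⟨h1, h2, c, fun i => ?_⟩
    rw [← auxQ_coeff, ← auxQ_coeff, hc, coeff_C_mul]
  refine Finset.card_le_mul_card_image_of_maps_to
    (f := fun t => ((t.1 0, t.1 1), (t.2 0, t.2 1))) ?_ _ ?_
  · intro t ht
    obtain ⟨h1, h2, c, hc⟩ := hmem t ht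
    simp only [Finset.mem_filter, auxPair, Finset.mem_product]
    refine ⟨⟨⟨h1 0, h1 1⟩, h2 0, h2 1⟩, ?_⟩
    rw [hc 0, hc 1]; ring
  · intro b _
    rw [← auxBox_card N m]
    apply Finset.card_le_card_of_injOn (fun t i => t.1 (Fin.succ (Fin.succ i)))
    · intro t ht
      rw [Finset.mem_coe, Finset.mem_filter] at ht
      obtain ⟨h1, h2, c, hc⟩ := hmem t ht.1
      rw [Finset.mem_coe, auxBox, Fintype.mem_piFinset]
      exact fun i => h1 _
    · intro t ht t' ht' h
      rw [Finset.mem_coe, Finset.mem_filter] at ht ht'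
      obtain ⟨h1, h2, c, hc⟩ := hmem t ht.1
      obtain ⟨h1', h2', c', hc'⟩ := hmem t' ht'.1
      have e := ht.2.trans ht'.2.symm
      simp only [Prod.mk.injEq] at e
      have e1 : t.1 = t'.1 := by
        funext i
        refine Fin.cases e.1.1 (fun j => ?_) i
        refine Fin.cases e.1.2 (fun l => ?_) j
        exact congrFun h l
      have hcc : c = c' := by
        have a := hc 0
        rw [e1, hc' 0, e.2.1] at a
        exact (mul_right_cancel₀ (aux_cast_ne (h2' 0) hN) a).symm
      have hcne : c ≠ 0 := by
        intro h0
        have a := hc 0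
        rw [h0, zero_mul] at a
        exact aux_cast_ne (h1 0) hN a
      refine Prod.ext e1 (funext fun i => ?_)
      have b1 := h2 i
      have b2 := h2' i
      rw [Finset.mem_Icc] at b1 b2
      apply aux_cast_inj (p := p) (by omega) (by omega)
      apply mul_left_cancel₀ hcne
      rw [← hc i, e1, hc' i, hcc]

lemma aux_countB {N M m T : ℕ} (hN : N < p) (hM : M < p)
    (hT : ∀ n, n ≠ 0 → n ≤ p ^ 2 → #n.divisors ≤ T) :
    #{t ∈ (auxBox N (m + 2) ×ˢ auxPair M) ×ˢ (auxBox N (m + 2) ×ˢ auxPair M) |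
      ∃ c : ZMod p, auxQ p t.1.1 * auxL p t.1.2 = C c * (auxQ p t.2.1 * auxL p t.2.2)} ≤
      (N ^ m * (T * (N * N * (N * N / p + 1)))) * (T * (M * M * (M * M / p + 1))) +
        (M * M) * (M * M) * (N * N ^ (m + 1)) := by
  classical
  set S := (auxBox N (m + 2) ×ˢ auxPair M) ×ˢ (auxBox N (m + 2) ×ˢ auxPair M) with hS
  have hmem : ∀ t ∈ S.filter (fun t => ∃ c : ZMod p,
      auxQ p t.1.1 * auxL p t.1.2 = C c * (auxQ p t.2.1 * auxL p t.2.2)),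
      (t.1.1 ∈ auxBox N (m + 2) ∧ t.1.2 ∈ auxPair M ∧ t.2.1 ∈ auxBox N (m + 2) ∧
        t.2.2 ∈ auxPair M) ∧
      ∃ c : ZMod p, auxQ p t.1.1 * auxL p t.1.2 = C c * (auxQ p t.2.1 * auxL p t.2.2) := by
    intro t ht
    rw [Finset.mem_filter, hS, Finset.mem_product, Finset.mem_product, Finset.mem_product] at ht
    exact ⟨⟨ht.1.1.1, ht.1.1.2, ht.1.2.1, ht.1.2.2⟩, ht.2⟩
  rw [← Finset.card_filter_add_card_filter_not
    (fun t : ((Fin (m + 2) → ℕ) × ℕ × ℕ) × ((Fin (m + 2) → ℕ) × ℕ × ℕ) =>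
      (t.1.2.1 : ZMod p) * t.2.2.2 = t.1.2.2 * t.2.2.1)]
  apply Nat.add_le_add
  · refine le_trans ?_ (Nat.mul_le_mul (aux_countPar (m := m) hN hT) (aux_countD hM hT))
    rw [← Finset.card_product]
    apply Finset.card_le_card_of_injOn (fun t => ((t.1.1, t.2.1), (t.1.2, t.2.2)))
    · intro t ht
      rw [Finset.mem_coe, Finset.mem_filter] at ht
      obtain ⟨⟨h1, h2, h3, h4⟩, c, hc⟩ := hmem t ht.1
      rw [Finset.mem_coe, Finset.mem_product, Finset.mem_filter, Finset.mem_filter,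
        Finset.mem_product, Finset.mem_product]
      refine ⟨⟨⟨h1, h3⟩, ?_⟩, ⟨h2, h4⟩, ht.2⟩
      have n2 : (t.1.2.2 : ZMod p) ≠ 0 := by
        rw [auxPair, Finset.mem_product] at h2
        exact aux_cast_ne h2.2 hM
      have n4 : (t.2.2.2 : ZMod p) ≠ 0 := by
        rw [auxPair, Finset.mem_product] at h4
        exact aux_cast_ne h4.2 hM
      have hl : auxL p t.2.2 = C ((t.2.2.2 : ZMod p) / t.1.2.2) * auxL p t.1.2 := by
        rw [auxL_eq hM h2, auxL_eq hM h4, ← mul_assoc, ← C_mul, div_mul_cancel₀ _ n2]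
        congr 3
        rw [div_eq_div_iff n4 n2]
        linear_combination ht.2
      refine ⟨c * ((t.2.2.2 : ZMod p) / t.1.2.2), mul_right_cancel₀ (auxL_ne hM h2) ?_⟩
      simp only
      rw [hc, hl, C_mul]
      ring
    · intro t _ t' _ h
      simp only [Prod.mk.injEq] at h
      exact Prod.ext (Prod.ext h.1.1 h.2.1) (Prod.ext h.1.2 h.2.2)
  · have hcard : (M * M) * (M * M) * (N * N ^ (m + 1)) =
        #((auxPair M ×ˢ auxPair M) ×ˢ (Finset.Icc 1 N ×ˢ auxBox N (m + 1))) := by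
      simp only [Finset.card_product, auxPair_card, auxBox_card, Nat.card_Icc]
      simp
    rw [hcard]
    have hroot : ∀ t ∈ (S.filter (fun t => ∃ c : ZMod p,
        auxQ p t.1.1 * auxL p t.1.2 = C c * (auxQ p t.2.1 * auxL p t.2.2))).filter
        (fun t => ¬ (t.1.2.1 : ZMod p) * t.2.2.2 = t.1.2.2 * t.2.2.1),
        (auxQ p t.1.1).eval (-(t.2.2.1 : ZMod p) / t.2.2.2) = 0 := by
      intro t ht
      rw [Finset.mem_filter] at ht
      obtain ⟨⟨h1, h2, h3, h4⟩, c, hc⟩ := hmem t ht.1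
      have n4 : (t.2.2.2 : ZMod p) ≠ 0 := by
        rw [auxPair, Finset.mem_product] at h4
        exact aux_cast_ne h4.2 hM
      have := congrArg (Polynomial.eval (-(t.2.2.1 : ZMod p) / t.2.2.2)) hc
      rw [auxL_eq hM h4, eval_mul] at this
      simp only [eval_mul, eval_sub, eval_X, eval_C, sub_self, mul_zero] at this
      rcases mul_eq_zero.1 this with h | h
      · exact h
      · exfalso
        apply ht.2
        rw [auxL] at h
        simp only [eval_add, eval_mul, eval_C, eval_X] at h
        field_simp at h
        linear_combination h
    apply Finset.card_le_card_of_injOn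
      (fun t => ((t.1.2, t.2.2), (t.2.1 0, fun i : Fin (m + 1) => t.1.1 i.succ)))
    · intro t ht
      rw [Finset.mem_coe, Finset.mem_filter] at ht
      obtain ⟨⟨h1, h2, h3, h4⟩, c, hc⟩ := hmem t ht.1
      rw [auxBox, Fintype.mem_piFinset] at h1 h3
      rw [Finset.mem_coe, Finset.mem_product, Finset.mem_product, Finset.mem_product, auxBox,
        Fintype.mem_piFinset]
      exact ⟨⟨h2, h4⟩, h3 0, fun i => h1 _⟩
    · intro t ht t' ht' h
      have r1 := hroot t ht
      have r2 := hroot t' ht'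
      rw [Finset.mem_coe, Finset.mem_filter] at ht ht'
      obtain ⟨⟨h1, h2, h3, h4⟩, c, hc⟩ := hmem t ht.1
      obtain ⟨⟨h1', h2', h3', h4'⟩, c', hc'⟩ := hmem t' ht'.1
      simp only [Prod.mk.injEq] at h
      obtain ⟨⟨e1, e2⟩, e3, e4⟩ := h
      have ex : t.1.1 = t'.1.1 := by
        have b1 := h1
        have b2 := h1'
        rw [auxBox, Fintype.mem_piFinset] at b1 b2
        have b1 := b1 0
        have b2 := b2 0
        rw [Finset.mem_Icc] at b1 b2
        have a0 : t.1.1 0 = t'.1.1 0 := by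
          apply aux_cast_inj (p := p) (by omega) (by omega)
          rw [← e2] at r2
          rw [← r2] at r1
          simp only [auxQ, Fin.sum_univ_succ (n := m + 1)] at r1
          have : ∀ i : Fin (m + 1), t.1.1 i.succ = t'.1.1 i.succ := fun i => congrFun e4 i
          simp only [this] at r1
          simpa using r1
        funext i
        exact Fin.cases a0 (fun j => congrFun e4 j) i
      have eq1 : C c * auxQ p t.2.1 = C c' * auxQ p t'.2.1 := by
        apply mul_right_cancel₀ (auxL_ne hM h4)
        rw [mul_assoc, ← hc, ex, e1, hc', e2, mul_assoc]
      have hcc : c = c' := by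
        have a := congrArg (fun q => coeff q ((0 : Fin (m + 2)) : ℕ)) eq1
        simp only [coeff_C_mul, auxQ_coeff] at a
        rw [e3] at a
        rw [auxBox, Fintype.mem_piFinset] at h3'
        exact mul_right_cancel₀ (aux_cast_ne (h3' 0) hN) a
      have hcne : c ≠ 0 := by
        intro h0
        rw [h0, C_0, zero_mul] at hc
        exact mul_ne_zero (auxQ_ne hN h1) (auxL_ne hM h2) hc
      rw [← hcc] at eq1
      have ex' := auxQ_inj hN h3 h3' (mul_left_cancel₀ (C_ne_zero.2 hcne) eq1)
      exact Prod.ext (Prod.ext ex e1) (Prod.ext ex' e2)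
end poly

section transfer
open Polynomial
variable {p : ℕ} [Fact p.Prime] {F : Type} [Field F] [Fintype F] [Algebra (ZMod p) F]

lemma aux_aeval_inj {d : ℕ} (ω : F)
    (h : ∀ cf : Fin d → ℤ, (∑ i, (cf i : F) * ω ^ (i : ℕ)) = 0 → ∀ i, (p : ℤ) ∣ cf i)
    (P : (ZMod p)[X]) (hP : P.natDegree < d) (h0 : aeval ω P = 0) : P = 0 := by
  have e : ∑ i : Fin d, (((P.coeff i).val : ℤ) : F) * ω ^ (i : ℕ) = 0 := by
    rw [← h0, aeval_eq_sum_range' hP, Finset.sum_range]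
    refine Finset.sum_congr rfl fun i _ => ?_
    rw [Algebra.smul_def]
    congr 1
    rw [Int.cast_natCast, ← map_natCast (algebraMap (ZMod p) F), ZMod.natCast_zmod_val]
  have h1 := h _ e
  ext i
  rw [coeff_zero]
  by_cases hi : i < d
  · have := h1 ⟨i, hi⟩
    simp only at this
    have h2 : p ∣ (P.coeff i).val := by exact_mod_cast this
    rw [← ZMod.natCast_eq_zero_iff, ZMod.natCast_zmod_val] at h2
    exact h2
  · exact coeff_eq_zero_of_natDegree_lt (by omega)

lemma aux_aeval_Q {D : ℕ} (ω : F) (x : Fin D → ℕ) :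
    aeval ω (auxQ p x) = ∑ i, (x i : F) * ω ^ (i : ℕ) := by
  simp [auxQ]

lemma aux_aeval_L (ω : F) (y : ℕ × ℕ) :
    aeval ω (auxL p y) = (y.1 : F) + (y.2 : F) * ω := by
  simp [auxL]

lemma aux_natDegree_QL {m : ℕ} (c : (Fin (m + 2) → ℕ) × ℕ × ℕ) :
    (auxQ p c.1 * auxL p c.2).natDegree ≤ m + 2 := by
  refine natDegree_mul_le.trans ?_
  have := auxQ_natDegree (p := p) c.1
  have := auxL_natDegree (p := p) c.2
  omega

lemma aux_Es {N M m T k n B : ℕ} (ω : F) (hN : N < p) (hM : M < p) (hn : n < p) (hnk : n ^ k ≤ p)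
    [DecidableEq F]
    (hω : ∀ P : (ZMod p)[X], P.natDegree < m + 3 → aeval ω P = 0 → P = 0)
    (hT : ∀ n, n ≠ 0 → n ≤ p ^ 2 → #n.divisors ≤ T)
    (hB : #{t ∈ (auxBox N (m + 2) ×ˢ auxPair M) ×ˢ (auxBox N (m + 2) ×ˢ auxPair M) |
      ∃ c : ZMod p, auxQ p t.1.1 * auxL p t.1.2 = C c * (auxQ p t.2.1 * auxL p t.2.2)} ≤ B) :
    #{t ∈ (Fintype.piFinset (fun _ : Fin k => Finset.Icc 1 n) ×ˢ
          (auxBox N (m + 2) ×ˢ auxPair M)) ×ˢ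
        (Fintype.piFinset (fun _ : Fin k => Finset.Icc 1 n) ×ˢ
          (auxBox N (m + 2) ×ˢ auxPair M)) |
        (∏ j, (t.1.1 j : F)) * aeval ω (auxQ p t.1.2.1 * auxL p t.1.2.2)
          = (∏ j, (t.2.1 j : F)) * aeval ω (auxQ p t.2.2.1 * auxL p t.2.2.2)} ≤
      T ^ k * (p * B) := by
  classical
  set Y := auxBox N (m + 2) ×ˢ auxPair M with hY
  set A := Fintype.piFinset (fun _ : Fin k => Finset.Icc 1 n) with hA
  clear_value A Y
  have hAc : #A ≤ p := by
    rw [hA, Fintype.card_piFinset]; simpa using hnk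
  have hYne : ∀ c ∈ Y, auxQ p c.1 * auxL p c.2 ≠ 0 := by
    intro c hc
    rw [hY, Finset.mem_product] at hc
    exact mul_ne_zero (auxQ_ne hN hc.1) (auxL_ne hM hc.2)
  have hYne' : ∀ c ∈ Y, aeval ω (auxQ p c.1 * auxL p c.2) ≠ 0 := by
    intro c hc h
    exact hYne c hc (hω _ (by have := aux_natDegree_QL (p := p) c; omega) h)
  have hAne : ∀ a ∈ A, ((∏ j, a j : ℕ) : ZMod p) ≠ 0 := by
    intro a ha
    rw [hA, Fintype.mem_piFinset] at ha
    push_cast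
    exact Finset.prod_ne_zero_iff.2 fun j _ => aux_cast_ne (ha j) hn
  have hAlt : ∀ a ∈ A, 0 < ∏ j, a j ∧ ∏ j, a j < p := by
    intro a ha
    have h1 := hAne a ha
    rw [hA, Fintype.mem_piFinset] at ha
    have h2 : ∏ j, a j ≤ n ^ k := by
      calc ∏ j, a j ≤ ∏ _j : Fin k, n :=
            Finset.prod_le_prod' fun j _ => (Finset.mem_Icc.1 (ha j)).2
        _ = n ^ k := by simp
    refine ⟨Finset.prod_pos fun j _ => (Finset.mem_Icc.1 (ha j)).1, lt_of_le_of_ne (h2.trans hnk) ?_⟩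
    intro h3
    rw [h3] at h1
    simp at h1
  refine le_trans ?_ (Nat.mul_le_mul_left _ (Nat.mul_le_mul hAc hB))
  rw [← Finset.card_product]
  refine Finset.card_le_mul_card_image_of_maps_to
    (f := fun t => (t.1.1, (t.1.2, t.2.2))) ?_ _ ?_
  · intro t ht
    rw [Finset.mem_filter, Finset.mem_product, Finset.mem_product, Finset.mem_product] at ht
    obtain ⟨⟨⟨h1, h2⟩, h3, h4⟩, h5⟩ := ht
    rw [Finset.mem_product, Finset.mem_filter, Finset.mem_product]
    refine ⟨h1, ⟨h2, h4⟩, ((∏ j, t.2.1 j : ℕ) : ZMod p) / ((∏ j, t.1.1 j : ℕ) : ZMod p), ?_⟩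
    simp only
    have e : C ((∏ j, t.1.1 j : ℕ) : ZMod p) * (auxQ p t.1.2.1 * auxL p t.1.2.2)
        - C ((∏ j, t.2.1 j : ℕ) : ZMod p) * (auxQ p t.2.2.1 * auxL p t.2.2.2) = 0 := by
      apply hω
      · refine lt_of_le_of_lt ((natDegree_sub_le _ _).trans (max_le ?_ ?_)) (Nat.lt_succ_self (m + 2))
        · exact (natDegree_C_mul_le _ _).trans (aux_natDegree_QL t.1.2)
        · exact (natDegree_C_mul_le _ _).trans (aux_natDegree_QL t.2.2)
      · rw [map_sub, map_mul, map_mul (aeval ω) (C _), aeval_C, aeval_C, map_natCast, map_natCast]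
        push_cast
        rw [h5, sub_self]
    rw [sub_eq_zero] at e
    apply mul_left_cancel₀ (C_ne_zero.2 (hAne _ h1))
    rw [e, ← mul_assoc (C _) (C _), ← C_mul, mul_div_cancel₀ _ (hAne _ h1)]
  · intro b _
    rcases Finset.eq_empty_or_nonempty (((A ×ˢ Y) ×ˢ (A ×ˢ Y) |>.filter
      (fun t => (∏ j, (t.1.1 j : F)) * aeval ω (auxQ p t.1.2.1 * auxL p t.1.2.2)
          = (∏ j, (t.2.1 j : F)) * aeval ω (auxQ p t.2.2.1 * auxL p t.2.2.2))).filter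
      (fun t => (t.1.1, (t.1.2, t.2.2)) = b)) with he | ⟨t0, ht0⟩
    · rw [he]; simp
    rw [Finset.mem_filter, Finset.mem_filter, Finset.mem_product, Finset.mem_product,
      Finset.mem_product] at ht0
    obtain ⟨⟨⟨⟨h1, h2⟩, h3, h4⟩, h5⟩, h6⟩ := ht0
    have hl0 := hAlt _ h3
    have hcard : #(Fintype.piFinset (fun _ : Fin k => (∏ j, t0.2.1 j).divisors)) ≤ T ^ k := by
      rw [Fintype.card_piFinset]
      simp only [Finset.prod_const, Finset.card_univ, Fintype.card_fin]
      exact Nat.pow_le_pow_left (hT _ hl0.1.ne' (by nlinarith)) _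
    refine le_trans ?_ hcard
    have hprod : ∀ t ∈ ((A ×ˢ Y) ×ˢ (A ×ˢ Y) |>.filter
      (fun t => (∏ j, (t.1.1 j : F)) * aeval ω (auxQ p t.1.2.1 * auxL p t.1.2.2)
          = (∏ j, (t.2.1 j : F)) * aeval ω (auxQ p t.2.2.1 * auxL p t.2.2.2))).filter
      (fun t => (t.1.1, (t.1.2, t.2.2)) = b), ∏ j, t.2.1 j = ∏ j, t0.2.1 j ∧
        t.1.1 = t0.1.1 ∧ t.1.2 = t0.1.2 ∧ t.2.2 = t0.2.2 := by
      intro t ht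
      rw [Finset.mem_filter, Finset.mem_filter, Finset.mem_product, Finset.mem_product,
        Finset.mem_product] at ht
      obtain ⟨⟨⟨⟨g1, g2⟩, g3, g4⟩, g5⟩, g6⟩ := ht
      have e := g6.trans h6.symm
      simp only [Prod.mk.injEq] at e
      refine ⟨?_, e⟩
      apply aux_cast_inj (p := p) (hAlt _ g3).2 hl0.2
      apply (algebraMap (ZMod p) F).injective
      rw [map_natCast, map_natCast]
      push_cast
      rw [e.1, e.2.1, e.2.2, h5] at g5
      exact (mul_right_cancel₀ (hYne' _ h4) g5).symm
    apply Finset.card_le_card_of_injOn (fun t => t.2.1)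
    · intro t ht
      rw [Finset.mem_coe, Fintype.mem_piFinset]
      intro j
      rw [Nat.mem_divisors]
      refine ⟨?_, hl0.1.ne'⟩
      rw [← (hprod t ht).1]
      exact Finset.dvd_prod_of_mem _ (Finset.mem_univ j)
    · intro t ht t' ht' h
      have e := (hprod t ht).2
      have e' := (hprod t' ht').2
      exact Prod.ext (Prod.ext (e.1.trans e'.1.symm) (e.2.1.trans e'.2.1.symm))
        (Prod.ext h (e.2.2.trans e'.2.2.symm))

end transfer

lemma aux_final_num {r : ℕ} (k : Fin r → ℕ) (hk : ∀ s, 0 < k s)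
    (hks : ∑ s, (1 : ℝ) / (k s) ≤ 1) (D T Z P M2 e : ℝ) (hD : 1 ≤ D) (hT : 1 ≤ T) (hZ : 0 < Z)
    (hP : 0 < P) (hM2 : 0 < M2) (n : Fin r → ℝ) (hn : ∀ s, 0 ≤ n s)
    (h : ∀ s, (P * M2) ^ ((1 : ℝ) / (k s)) ≤ 4 * n s ^ e) :
    (∏ s, (T ^ k s * (P * (6 * T ^ 2 * Z * M2))) ^ ((1 : ℝ) / (k s))) *
      (T * D * Z) ^ (1 - ∑ s, (1 : ℝ) / (k s)) ≤
      (D * 24 ^ r * T ^ (∑ s, (k s + 2) + 1)) * Z * ∏ s, n s ^ e := by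
  have hT0 : 0 < T := by linarith
  have h1 : ∀ s, (T ^ k s * (P * (6 * T ^ 2 * Z * M2))) ^ ((1 : ℝ) / (k s)) ≤
      Z ^ ((1 : ℝ) / (k s)) * (24 * T ^ (k s + 2) * n s ^ e) := by
    intro s
    have e1 : T ^ k s * (P * (6 * T ^ 2 * Z * M2)) = Z * ((P * M2) * (6 * T ^ (k s + 2))) := by
      ring
    rw [e1, Real.mul_rpow hZ.le (by positivity), Real.mul_rpow (by positivity) (by positivity)]
    have h6 : 1 ≤ 6 * T ^ (k s + 2) := by
      have : 1 ≤ T ^ (k s + 2) := one_le_pow₀ hT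
      linarith
    have h7 : (6 * T ^ (k s + 2)) ^ ((1 : ℝ) / (k s)) ≤ 6 * T ^ (k s + 2) := by
      conv_rhs => rw [← Real.rpow_one (6 * T ^ (k s + 2))]
      apply Real.rpow_le_rpow_of_exponent_le h6
      rw [div_le_one (by exact_mod_cast hk s)]
      exact_mod_cast hk s
    apply mul_le_mul_of_nonneg_left _ (by positivity)
    calc (P * M2) ^ ((1 : ℝ) / (k s)) * (6 * T ^ (k s + 2)) ^ ((1 : ℝ) / (k s))
        ≤ (4 * n s ^ e) * (6 * T ^ (k s + 2)) := by
          apply mul_le_mul (h s) h7 (by positivity)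
          have := Real.rpow_nonneg (hn s) e
          positivity
      _ = _ := by ring
  set κ := ∑ s, (1 : ℝ) / (k s) with hκ
  have hκ0 : 0 ≤ κ := Finset.sum_nonneg fun s _ => by positivity
  have h2 : (T * D * Z) ^ (1 - κ) ≤ T * D * Z ^ (1 - κ) := by
    rw [Real.mul_rpow (by positivity) hZ.le]
    apply mul_le_mul_of_nonneg_right _ (by positivity)
    conv_rhs => rw [← Real.rpow_one (T * D)]
    apply Real.rpow_le_rpow_of_exponent_le (by nlinarith) (by linarith)
  have hne : ∀ s, 0 ≤ n s ^ e := fun s => Real.rpow_nonneg (hn s) e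
  have hZZ : Z ^ κ * Z ^ (1 - κ) = Z := by
    rw [← Real.rpow_add hZ]; simp
  calc _ ≤ (∏ s, Z ^ ((1 : ℝ) / (k s)) * (24 * T ^ (k s + 2) * n s ^ e)) *
        (T * D * Z ^ (1 - κ)) := by
        apply mul_le_mul _ h2 (by positivity)
        · exact Finset.prod_nonneg fun s _ => by have := hne s; positivity
        · exact Finset.prod_le_prod (fun s _ => by positivity) fun s _ => h1 s
    _ = (Z ^ κ * Z ^ (1 - κ)) * (D * 24 ^ r * T ^ (∑ s, (k s + 2) + 1)) * ∏ s, n s ^ e := by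
        rw [Finset.prod_mul_distrib, Finset.prod_mul_distrib, Finset.prod_mul_distrib,
          ← Real.rpow_sum_of_pos hZ, Finset.prod_const, Finset.card_univ, Fintype.card_fin,
          Finset.prod_pow_eq_pow_sum, pow_succ, ← hκ]
        ring
    _ = _ := by rw [hZZ]; ring

lemma aux_half_floor (x : ℝ) (hx : 1 ≤ x) : 1 ≤ ⌊x⌋₊ ∧ x ≤ 2 * (⌊x⌋₊ : ℝ) ∧ (⌊x⌋₊ : ℝ) ≤ x := by
  have h1 : 1 ≤ ⌊x⌋₊ := Nat.le_floor (by simpa using hx)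
  have h2 := Nat.lt_floor_add_one x
  have h3 : (1 : ℝ) ≤ ⌊x⌋₊ := by exact_mod_cast h1
  exact ⟨h1, by linarith, Nat.floor_le (by linarith)⟩

lemma aux_int_icc {x : ℝ} (hx : 0 ≤ x) (z : ℤ) (hz : z ∈ Finset.Icc (1 : ℤ) ⌊x⌋) :
    z.toNat ∈ Finset.Icc 1 ⌊x⌋₊ ∧ ((z.toNat : ℕ) : ℤ) = z := by
  rw [Finset.mem_Icc] at hz
  have h1 : ((⌊x⌋₊ : ℕ) : ℤ) = ⌊x⌋ := Int.natCast_floor_eq_floor hx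
  rw [Finset.mem_Icc]
  omega

lemma aux_nat_icc {x : ℝ} (hx : 0 ≤ x) (a : ℕ) (ha : a ∈ Finset.Icc 1 ⌊x⌋₊) :
    (a : ℤ) ∈ Finset.Icc (1 : ℤ) ⌊x⌋ := by
  rw [Finset.mem_Icc] at ha
  have h1 : ((⌊x⌋₊ : ℕ) : ℤ) = ⌊x⌋ := Int.natCast_floor_eq_floor hx
  rw [Finset.mem_Icc]
  omega

lemma aux_Bn {N M m T p : ℕ} (hT : 1 ≤ T) (h1 : N * N / p + 1 ≤ 5 * (M * M)) (h2 : M * M < p) :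
    (N ^ m * (T * (N * N * (N * N / p + 1)))) * (T * (M * M * (M * M / p + 1))) +
        (M * M) * (M * M) * (N * N ^ (m + 1)) ≤
      6 * T ^ 2 * (N ^ (m + 2) * (M * M)) * (M * M) := by
  rw [Nat.div_eq_of_lt h2]
  have e1 : (N ^ m * (T * (N * N * (N * N / p + 1)))) * (T * (M * M * (0 + 1)))
      ≤ (N ^ m * (T * (N * N * (5 * (M * M))))) * (T * (M * M * (0 + 1))) := by gcongr
  have e2 : (M * M) * (M * M) * (N * N ^ (m + 1)) * 1 ≤
      (M * M) * (M * M) * (N * N ^ (m + 1)) * T ^ 2 :=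
    Nat.mul_le_mul_left _ (Nat.one_le_pow _ _ hT)
  calc _ ≤ (N ^ m * (T * (N * N * (5 * (M * M))))) * (T * (M * M * (0 + 1))) +
        (M * M) * (M * M) * (N * N ^ (m + 1)) * T ^ 2 := by
          rw [mul_one] at e2; exact Nat.add_le_add e1 e2
    _ = _ := by ring

open Polynomial in
/-- The bound for a fixed prime, with integer parameters. -/
theorem aux_core {p : ℕ} [Fact p.Prime] {F : Type} [Field F] [Fintype F] [Algebra (ZMod p) F]
    {r m N M T : ℕ} (k : Fin r → ℕ) (hk : ∀ s, 0 < k s)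
    (hks : ∑ s, (1 : ℝ) / (k s) ≤ 1) (ω : F)
    (hω : ∀ P : (ZMod p)[X], P.natDegree < m + 3 → aeval ω P = 0 → P = 0)
    (hN1 : 1 ≤ N) (hM1 : 1 ≤ M) (hT1 : 1 ≤ T)
    (hN : N < p) (hM : M < p) (hNM : N * M < p) (hMM : M * M < p)
    (hNN : N * N / p + 1 ≤ 5 * (M * M))
    (hT : ∀ n, n ≠ 0 → n ≤ p ^ 2 → #n.divisors ≤ T)
    (n : Fin r → ℕ) (hn : ∀ s, n s < p) (hnk : ∀ s, n s ^ k s ≤ p)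
    (e : ℝ) (he : ∀ s, ((p : ℝ) * ((M : ℝ) * M)) ^ ((1 : ℝ) / (k s)) ≤ 4 * (n s : ℝ) ^ e)
    (Q Q₀ : Set F) (I : Fin r → Set F)
    (hQ : Q = (fun x => aeval ω (auxQ p x)) '' (auxBox N (m + 2) : Set (Fin (m + 2) → ℕ)))
    (hQ₀ : Q₀ = (fun y => aeval ω (auxL p y)) '' (auxPair M : Set (ℕ × ℕ)))
    (hI : ∀ s, I s = (fun a : ℕ => (a : F)) '' (Finset.Icc 1 (n s) : Set ℕ)) :
    (Nat.card {t : ((Fin r → F) × F × F) × ((Fin r → F) × F × F) //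
            (∀ s, t.1.1 s ∈ I s) ∧ t.1.2.1 ∈ Q ∧ t.1.2.2 ∈ Q₀ ∧
            (∀ s, t.2.1 s ∈ I s) ∧ t.2.2.1 ∈ Q ∧ t.2.2.2 ∈ Q₀ ∧
            (∀ s, t.1.1 s ≠ 0) ∧ t.1.2.1 ≠ 0 ∧ t.1.2.2 ≠ 0 ∧
            (∀ s, t.2.1 s ≠ 0) ∧ t.2.2.1 ≠ 0 ∧ t.2.2.2 ≠ 0 ∧
            (∏ s, t.1.1 s) * t.1.2.1 * t.1.2.2 = (∏ s, t.2.1 s) * t.2.2.1 * t.2.2.2} : ℝ)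
      ≤ (((m + 2 : ℕ) : ℝ) * 24 ^ r * (T : ℝ) ^ (∑ s, (k s + 2) + 1)) * Q.ncard * Q₀.ncard *
          ∏ s, ((I s).ncard : ℝ) ^ e := by
  classical
  have hcast : ∀ a : ℕ, (a : F) = algebraMap (ZMod p) F (a : ZMod p) := fun a => by simp
  -- cardinalities
  have hQc : Q.ncard = N ^ (m + 2) := by
    rw [hQ, Set.ncard_image_of_injOn, Set.ncard_coe_finset, auxBox_card]
    intro x hx x' hx' h
    simp only at h
    rw [← sub_eq_zero, ← map_sub] at h
    have h0 := hω _ (lt_of_le_of_lt ((natDegree_sub_le _ _).trans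
      (max_le (auxQ_natDegree x) (auxQ_natDegree x'))) (by omega)) h
    exact auxQ_inj hN hx hx' (sub_eq_zero.1 h0)
  have hQ₀c : Q₀.ncard = M * M := by
    rw [hQ₀, Set.ncard_image_of_injOn, Set.ncard_coe_finset, auxPair_card]
    intro y hy y' hy' h
    simp only at h
    rw [← sub_eq_zero, ← map_sub] at h
    have h0 := sub_eq_zero.1 (hω _ (lt_of_le_of_lt ((natDegree_sub_le _ _).trans
      (max_le (auxL_natDegree y) (auxL_natDegree y'))) (by omega)) h)
    rw [Finset.mem_coe, auxPair, Finset.mem_product, Finset.mem_Icc, Finset.mem_Icc] at hy hy'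
    have c0 := congrArg (fun q => coeff q 0) h0
    have c1 := congrArg (fun q => coeff q 1) h0
    simp [auxL] at c0 c1
    exact Prod.ext (aux_cast_inj (p := p) (by omega) (by omega) c0)
      (aux_cast_inj (p := p) (by omega) (by omega) c1)
  have hIc : ∀ s, (I s).ncard = n s := by
    intro s
    rw [hI, Set.ncard_image_of_injOn, Set.ncard_coe_finset]
    · simp
    intro a ha b hb h
    simp only [hcast] at h
    rw [Finset.mem_coe, Finset.mem_Icc] at ha hb
    have := hn s
    exact aux_cast_inj (p := p) (by omega) (by omega) ((algebraMap (ZMod p) F).injective h)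
  -- energies
  set Y := auxBox N (m + 2) ×ˢ auxPair M with hY
  have hYne : ∀ c ∈ Y, aeval ω (auxQ p c.1 * auxL p c.2) ≠ 0 := by
    intro c hc h
    rw [hY, Finset.mem_product] at hc
    exact mul_ne_zero (auxQ_ne hN hc.1) (auxL_ne hM hc.2)
      (hω _ (by have := aux_natDegree_QL (p := p) c; omega) h)
  have hE0 : #{t ∈ Y ×ˢ Y | aeval ω (auxQ p t.1.1 * auxL p t.1.2) =
      aeval ω (auxQ p t.2.1 * auxL p t.2.2)} ≤ T * (m + 2) * (N ^ (m + 2) * (M * M)) := by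
    refine le_trans (Finset.card_le_card ?_) (aux_countA hNM hN hM hT)
    intro t ht
    rw [Finset.mem_filter] at ht ⊢
    refine ⟨ht.1, ?_⟩
    have h := ht.2
    rw [← sub_eq_zero, ← map_sub] at h
    exact sub_eq_zero.1 (hω _ (lt_of_le_of_lt ((natDegree_sub_le _ _).trans
      (max_le (aux_natDegree_QL t.1) (aux_natDegree_QL t.2))) (by omega)) h)
  have hEs := fun s => aux_Es (N := N) (M := M) (k := k s) ω hN hM (hn s) (hnk s) hω hT
    ((aux_countB (m := m) hN hM hT).trans (aux_Bn hT1 hNN hMM))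
  set Z : ℕ := N ^ (m + 2) * (M * M) with hZ
  have hZpos : 0 < Z := by positivity
  have hppos : 0 < p := (Fact.out : p.Prime).pos
  have hold := aux_energy_holder k hk hks (fun s => Finset.Icc 1 (n s))
    (fun s a ha => by
      rw [hcast]
      exact (_root_.map_ne_zero _).2 (aux_cast_ne ha (hn s)))
    Y (fun c => aeval ω (auxQ p c.1 * auxL p c.2)) hYne
    (fun s => (T : ℝ) ^ k s * ((p : ℝ) * (6 * (T : ℝ) ^ 2 * (Z : ℝ) * ((M : ℝ) * M))))
    (fun s => by
      have : (0 : ℝ) < T := by exact_mod_cast hT1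
      have : (0 : ℝ) < M := by exact_mod_cast hM1
      have : (0 : ℝ) < Z := by exact_mod_cast hZpos
      have : (0 : ℝ) < p := by exact_mod_cast hppos
      positivity)
    ((T : ℝ) * ((m + 2 : ℕ) : ℝ) * (Z : ℝ)) (by
      have : (0 : ℝ) < T := by exact_mod_cast hT1
      have : (0 : ℝ) < Z := by exact_mod_cast hZpos
      positivity)
    (by exact_mod_cast hE0) (fun s => by exact_mod_cast hEs s)
  have hnum := aux_final_num k hk hks ((m + 2 : ℕ) : ℝ) T Z p ((M : ℝ) * M) e
    (by push_cast; linarith [(Nat.cast_nonneg m : (0 : ℝ) ≤ m)])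
    (by exact_mod_cast hT1) (by exact_mod_cast hZpos) (by exact_mod_cast hppos)
    (by have : (0 : ℝ) < M := by exact_mod_cast hM1
        positivity) (fun s => (n s : ℝ)) (fun s => by positivity) he
  have hfin := hold.trans hnum
  rw [hQc, hQ₀c]
  simp only [hIc]
  have e3 : (((m + 2 : ℕ) : ℝ) * 24 ^ r * (T : ℝ) ^ (∑ s, (k s + 2) + 1)) * (N ^ (m + 2) : ℕ)
      * (M * M : ℕ) = (((m + 2 : ℕ) : ℝ) * 24 ^ r * (T : ℝ) ^ (∑ s, (k s + 2) + 1)) * Z := by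
    rw [hZ]; push_cast; ring
  rw [e3]
  refine le_trans ?_ hfin
  -- the injection
  have hqi : ∀ z : F, ∃ x : Fin (m + 2) → ℕ, z ∈ Q → x ∈ auxBox N (m + 2) ∧ aeval ω (auxQ p x) = z := by
    intro z
    by_cases hz : z ∈ Q
    · rw [hQ] at hz
      obtain ⟨x, hx, hxz⟩ := hz
      exact ⟨x, fun _ => ⟨hx, hxz⟩⟩
    · exact ⟨0, fun h => absurd h hz⟩
  have hli : ∀ z : F, ∃ y : ℕ × ℕ, z ∈ Q₀ → y ∈ auxPair M ∧ aeval ω (auxL p y) = z := by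
    intro z
    by_cases hz : z ∈ Q₀
    · rw [hQ₀] at hz
      obtain ⟨x, hx, hxz⟩ := hz
      exact ⟨x, fun _ => ⟨hx, hxz⟩⟩
    · exact ⟨0, fun h => absurd h hz⟩
  have hni : ∀ s : Fin r, ∀ z : F, ∃ a : ℕ, z ∈ I s → a ∈ Finset.Icc 1 (n s) ∧ (a : F) = z := by
    intro s z
    by_cases hz : z ∈ I s
    · rw [hI] at hz
      obtain ⟨x, hx, hxz⟩ := hz
      exact ⟨x, fun _ => ⟨hx, hxz⟩⟩
    · exact ⟨0, fun h => absurd h hz⟩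
  choose qi hqi using hqi
  choose li hli using hli
  choose ni hni using hni
  set S := ((Fintype.piFinset (fun s => Finset.Icc 1 (n s)) ×ˢ Y) ×ˢ
    (Fintype.piFinset (fun s => Finset.Icc 1 (n s)) ×ˢ Y)).filter
    (fun t => (∏ j, (t.1.1 j : F)) * aeval ω (auxQ p t.1.2.1 * auxL p t.1.2.2)
      = (∏ j, (t.2.1 j : F)) * aeval ω (auxQ p t.2.2.1 * auxL p t.2.2.2)) with hS
  have : #S = Nat.card S := by simp
  rw [this, Nat.cast_le]
  refine Nat.card_le_card_of_injective (fun t => ⟨((fun s => ni s (t.1.1.1 s), (qi t.1.1.2.1, li t.1.1.2.2)),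
    (fun s => ni s (t.1.2.1 s), (qi t.1.2.2.1, li t.1.2.2.2))), ?_⟩) ?_
  · obtain ⟨t, h1, h2, h3, h4, h5, h6, _, _, _, _, _, _, h⟩ := t
    rw [hS, Finset.mem_filter]
    simp only [Finset.mem_product, Fintype.mem_piFinset, hY]
    refine ⟨⟨⟨fun s => (hni s _ (h1 s)).1, (hqi _ h2).1, (hli _ h3).1⟩,
      fun s => (hni s _ (h4 s)).1, (hqi _ h5).1, (hli _ h6).1⟩, ?_⟩
    rw [map_mul, map_mul, (hqi _ h2).2, (hli _ h3).2, (hqi _ h5).2, (hli _ h6).2,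
      Finset.prod_congr rfl fun s _ => (hni s _ (h1 s)).2,
      Finset.prod_congr rfl fun s _ => (hni s _ (h4 s)).2, ← mul_assoc, ← mul_assoc]
    exact h
  · rintro ⟨t, h1, h2, h3, h4, h5, h6, _, _, _, _, _, _, _⟩ ⟨t', h1', h2', h3', h4', h5', h6', _, _, _, _, _, _, _⟩ h
    simp only [Subtype.mk.injEq, Prod.mk.injEq] at h
    obtain ⟨⟨a1, a2, a3⟩, a4, a5, a6⟩ := h
    rw [Subtype.mk.injEq]
    refine Prod.ext (Prod.ext (funext fun s => ?_) (Prod.ext ?_ ?_))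
      (Prod.ext (funext fun s => ?_) (Prod.ext ?_ ?_))
    · rw [← (hni s _ (h1 s)).2, ← (hni s _ (h1' s)).2, congrFun a1 s]
    · rw [← (hqi _ h2).2, ← (hqi _ h2').2, a2]
    · rw [← (hli _ h3).2, ← (hli _ h3').2, a3]
    · rw [← (hni s _ (h4 s)).2, ← (hni s _ (h4' s)).2, congrFun a4 s]
    · rw [← (hqi _ h5).2, ← (hqi _ h5').2, a5]
    · rw [← (hli _ h6).2, ← (hli _ h6').2, a6]

lemma aux_const (K T c₀ L l : ℝ) (w : ℕ) (hK : 1 ≤ K) (hT0 : 0 ≤ T) (hl : 0 < l) (hlL : l ≤ L)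
    (hT : T ≤ Real.exp (40 * L / l)) (hc : c₀ = Real.log K + 40 * w) :
    K * T ^ w ≤ Real.exp (c₀ * L / l) := by
  have h1 : 1 ≤ L / l := by rw [le_div_iff₀ hl]; linarith
  have h2 : K ≤ Real.exp (Real.log K * (L / l)) := by
    calc K = Real.exp (Real.log K) := (Real.exp_log (by linarith)).symm
      _ ≤ _ := by
        apply Real.exp_le_exp.2
        have := Real.log_nonneg hK
        nlinarith
  have h3 : T ^ w ≤ Real.exp (w * (40 * L / l)) := by
    rw [Real.exp_nat_mul]
    exact pow_le_pow_left₀ hT0 hT w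
  calc K * T ^ w ≤ Real.exp (Real.log K * (L / l)) * Real.exp (w * (40 * L / l)) :=
        mul_le_mul h2 h3 (by positivity) (by positivity)
    _ = _ := by rw [← Real.exp_add, hc]; congr 1; ring

lemma aux_pow_lt {P a b x y : ℝ} (hP : 1 < P) (hx0 : 0 ≤ x) (hy0 : 0 ≤ y)
    (hx : x ≤ P ^ a) (hy : y ≤ P ^ b) (hab : a + b < 1) : x * y < P := by
  calc x * y ≤ P ^ a * P ^ b := mul_le_mul hx hy hy0 (by positivity)
    _ = P ^ (a + b) := (Real.rpow_add (by linarith) _ _).symm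
    _ < P ^ (1 : ℝ) := Real.rpow_lt_rpow_of_exponent_lt hP hab
    _ = P := Real.rpow_one P

lemma aux_he {P μ M n : ℝ} {k : ℕ} (hP : 1 ≤ P) (hμ0 : 0 ≤ μ) (hμ : 2 * μ ≤ 1) (hM0 : 0 ≤ M)
    (hM : M ≤ P ^ μ) (hn0 : 0 ≤ n) (hn : P ^ ((1 : ℝ) / k) ≤ 2 * n) :
    (P * (M * M)) ^ ((1 : ℝ) / k) ≤ 4 * n ^ (1 + 2 * μ) := by
  have hP0 : 0 < P := by linarith
  have h1 : P * (M * M) ≤ P ^ (1 + 2 * μ) := by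
    rw [show 1 + 2 * μ = 1 + (μ + μ) by ring, Real.rpow_add hP0, Real.rpow_add hP0, Real.rpow_one]
    gcongr
  calc (P * (M * M)) ^ ((1 : ℝ) / k) ≤ (P ^ (1 + 2 * μ)) ^ ((1 : ℝ) / k) :=
        Real.rpow_le_rpow (by positivity) h1 (by positivity)
    _ = (P ^ ((1 : ℝ) / k)) ^ (1 + 2 * μ) := by
        rw [← Real.rpow_mul hP0.le, ← Real.rpow_mul hP0.le, mul_comm]
    _ ≤ (2 * n) ^ (1 + 2 * μ) := Real.rpow_le_rpow (by positivity) hn (by linarith)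
    _ = 2 ^ (1 + 2 * μ) * n ^ (1 + 2 * μ) := Real.mul_rpow (by norm_num) hn0
    _ ≤ 4 * n ^ (1 + 2 * μ) := by
        apply mul_le_mul_of_nonneg_right _ (by positivity)
        calc (2 : ℝ) ^ (1 + 2 * μ) ≤ 2 ^ (2 : ℝ) :=
              Real.rpow_le_rpow_of_exponent_le (by norm_num) (by linarith)
          _ = 4 := by norm_num

lemma aux_NN {p N M : ℕ} {σ μ : ℝ} (hp : 1 < p) (hN : (N : ℝ) ≤ (p : ℝ) ^ σ) (hM1 : 1 ≤ M)
    (hM : (p : ℝ) ^ μ ≤ 2 * M) (h : 2 * σ - 1 ≤ 2 * μ) : N * N / p + 1 ≤ 5 * (M * M) := by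
  have hp1 : (1 : ℝ) < p := by exact_mod_cast hp
  have hp0 : (0 : ℝ) < p := by linarith
  have h1 : ((N * N / p : ℕ) : ℝ) ≤ 4 * (M * M) := by
    calc ((N * N / p : ℕ) : ℝ) ≤ ((N * N : ℕ) : ℝ) / p := Nat.cast_div_le
      _ ≤ ((p : ℝ) ^ σ * (p : ℝ) ^ σ) / p := by
          push_cast
          gcongr
      _ = (p : ℝ) ^ (2 * σ - 1) := by
          rw [← Real.rpow_add hp0, Real.rpow_sub_one hp0.ne', two_mul]
      _ ≤ (p : ℝ) ^ (2 * μ) := Real.rpow_le_rpow_of_exponent_le hp1.le h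
      _ = (p : ℝ) ^ μ * (p : ℝ) ^ μ := by rw [two_mul, Real.rpow_add hp0]
      _ ≤ (2 * M) * (2 * M) := by gcongr
      _ = _ := by ring
  have h2 : N * N / p ≤ 4 * (M * M) := by exact_mod_cast h1
  nlinarith


/-- multiplicative energy bound
`E(I₁, …, I_r, Q, Q₀) ≤ exp(c log p / log log p) |Q||Q₀| ∏_s |I_s|^{(19−4σ)/10}`
in `F_{p^d}`, where `I_s = [1, p^{1/k_s}]` with `∑ 1/k_s < 1`, and `Q`, `Q₀`
are as in the previous statements. -/
theorem stmt5 (d : ℕ) (hd : 3 ≤ d) (r : ℕ) (hr : 1 ≤ r)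
    (k : Fin r → ℕ) (hk : ∀ s, 0 < k s) (hksum : ∑ s, (1 : ℝ) / (k s) < 1) :
    ∃ c : ℝ, 0 < c ∧ ∃ p₀ : ℕ, ∀ p : ℕ, p.Prime → p₀ < p →
      ∀ (F : Type) [Field F] [Fintype F], Fintype.card F = p ^ d →
      ∀ ω : F,
        (∀ cf : Fin d → ℤ, (∑ i, (cf i : F) * ω ^ (i : ℕ)) = 0 → ∀ i, (p : ℤ) ∣ cf i) →
        (∀ z : F, ∃ cf : Fin d → ℤ, z = ∑ i, (cf i : F) * ω ^ (i : ℕ)) →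
      ∀ σ : ℝ, 0 < σ → σ < 11 / 16 →
      ∀ Q Q₀ : Set F, ∀ I : Fin r → Set F,
        Q = {z : F | ∃ x : Fin (d - 1) → ℤ,
              (∀ i, x i ∈ Finset.Icc (1 : ℤ) ⌊(p : ℝ) ^ σ⌋) ∧
              z = ∑ i, (x i : F) * ω ^ (i : ℕ)} →
        Q₀ = {z : F | ∃ y₀ y₁ : ℤ,
              y₀ ∈ Finset.Icc (1 : ℤ) ⌊(p : ℝ) ^ ((9 : ℝ) / 20 - σ / 5)⌋ ∧
              y₁ ∈ Finset.Icc (1 : ℤ) ⌊(p : ℝ) ^ ((9 : ℝ) / 20 - σ / 5)⌋ ∧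
              z = (y₀ : F) + (y₁ : F) * ω} →
        (∀ s : Fin r, I s = {z : F | ∃ n : ℤ,
              n ∈ Finset.Icc (1 : ℤ) ⌊(p : ℝ) ^ ((1 : ℝ) / (k s))⌋ ∧ z = (n : F)}) →
        -- multiplicative energy `E(I₁, …, I_r, Q, Q₀)`
        (Nat.card {t : ((Fin r → F) × F × F) × ((Fin r → F) × F × F) //
            (∀ s, t.1.1 s ∈ I s) ∧ t.1.2.1 ∈ Q ∧ t.1.2.2 ∈ Q₀ ∧
            (∀ s, t.2.1 s ∈ I s) ∧ t.2.2.1 ∈ Q ∧ t.2.2.2 ∈ Q₀ ∧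
            (∀ s, t.1.1 s ≠ 0) ∧ t.1.2.1 ≠ 0 ∧ t.1.2.2 ≠ 0 ∧
            (∀ s, t.2.1 s ≠ 0) ∧ t.2.2.1 ≠ 0 ∧ t.2.2.2 ≠ 0 ∧
            (∏ s, t.1.1 s) * t.1.2.1 * t.1.2.2 = (∏ s, t.2.1 s) * t.2.2.1 * t.2.2.2} : ℝ)
          ≤ Real.exp (c * Real.log p / Real.log (Real.log p)) * Q.ncard * Q₀.ncard *
              ∏ s, ((I s).ncard : ℝ) ^ ((19 - 4 * σ) / 10) := by
  obtain ⟨m, rfl⟩ : ∃ m, d = m + 3 := ⟨d - 3, by omega⟩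
  set w : ℕ := ∑ s, (k s + 2) + 1 with hw
  set K : ℝ := ((m + 2 : ℕ) : ℝ) * 24 ^ r with hK
  have hK1 : 1 ≤ K := by
    have h1 : (1 : ℝ) ≤ ((m + 2 : ℕ) : ℝ) := by exact_mod_cast (by omega : 1 ≤ m + 2)
    have h2 : (1 : ℝ) ≤ 24 ^ r := one_le_pow₀ (by norm_num)
    rw [hK]
    nlinarith
  refine ⟨Real.log K + 40 * w, ?_, 100, ?_⟩
  · have := Real.log_nonneg hK1
    have h2 : (0 : ℝ) < w := by exact_mod_cast Nat.succ_pos _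
    linarith
  intro p hp hp100 F _ _ hcard ω hω _ σ hσ0 hσ Q Q₀ I hQ hQ₀ hI
  haveI : Fact p.Prime := ⟨hp⟩
  haveI : CharP F p := by
    have h0 : (p : F) = 0 := by
      have h := Nat.cast_card_eq_zero F
      rw [hcard, Nat.cast_pow] at h
      exact pow_eq_zero_iff (by omega) |>.1 h
    obtain ⟨q, hq⟩ := CharP.exists F
    have hqp : q ∣ p := (CharP.cast_eq_zero_iff F q p).1 h0
    rcases (Nat.dvd_prime hp).1 hqp with h | h
    · exact absurd h (CharP.char_ne_one F q)
    · exact h ▸ hq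
  letI : Algebra (ZMod p) F := ZMod.algebra F p
  have hP1 : (1 : ℝ) < p := by exact_mod_cast hp.one_lt
  have hP0 : (0 : ℝ) < p := by linarith
  have hL : 4 ≤ Real.log p := by
    rw [Real.le_log_iff_exp_le hP0]
    have h1 : Real.exp 4 = Real.exp 1 ^ 4 := by rw [← Real.exp_nat_mul]; norm_num
    have h2 := Real.exp_one_lt_d9
    have h3 : Real.exp 1 ^ 4 ≤ 2.7182818286 ^ 4 :=
      pow_le_pow_left₀ (Real.exp_pos 1).le h2.le 4
    have h4 : (100 : ℝ) < p := by exact_mod_cast hp100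
    rw [h1]
    norm_num at h3 ⊢
    linarith
  set L := Real.log p with hLdef
  have hlL : 0 < Real.log L := Real.log_pos (by linarith)
  have hlL' : Real.log L ≤ L := by
    have := Real.log_le_sub_one_of_pos (show 0 < L by linarith)
    linarith
  set μ : ℝ := (9 : ℝ) / 20 - σ / 5 with hμ
  have hμ0 : 0 < μ := by rw [hμ]; linarith
  obtain ⟨hN1, -, hNle⟩ := aux_half_floor ((p : ℝ) ^ σ) (Real.one_le_rpow hP1.le hσ0.le)
  obtain ⟨hM1, hMge, hMle⟩ := aux_half_floor ((p : ℝ) ^ μ) (Real.one_le_rpow hP1.le hμ0.le)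
  have hn := fun s => aux_half_floor ((p : ℝ) ^ ((1 : ℝ) / (k s)))
    (Real.one_le_rpow hP1.le (by positivity))
  have hT1 : 1 ≤ Real.exp (40 * L / Real.log L) := Real.one_le_exp (by positivity)
  obtain ⟨hT1, -, hTle⟩ := aux_half_floor _ hT1
  have hk1 : ∀ s, (1 : ℝ) / (k s) < 1 := fun s =>
    lt_of_le_of_lt (Finset.single_le_sum (f := fun s => (1 : ℝ) / (k s))
      (fun i _ => by positivity) (Finset.mem_univ s)) hksum
  have hlt : ∀ a b : ℝ, ∀ x y : ℕ, (x : ℝ) ≤ (p : ℝ) ^ a → (y : ℝ) ≤ (p : ℝ) ^ b → a + b < 1 →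
      x * y < p := by
    intro a b x y hx hy hab
    have := aux_pow_lt hP1 (Nat.cast_nonneg x) (Nat.cast_nonneg y) hx hy hab
    exact_mod_cast this
  have hlt1 : ∀ a : ℝ, ∀ x : ℕ, (x : ℝ) ≤ (p : ℝ) ^ a → a < 1 → x < p := by
    intro a x hx ha
    have := hlt a 0 x 1 hx (by simp) (by linarith)
    simpa using this
  have hcore := aux_core (p := p) (F := F) (m := m) (N := ⌊(p : ℝ) ^ σ⌋₊) (M := ⌊(p : ℝ) ^ μ⌋₊)
    (T := ⌊Real.exp (40 * L / Real.log L)⌋₊) k hk hksum.le ω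
    (fun P => aux_aeval_inj ω hω P) hN1 hM1 hT1
    (hlt1 σ _ hNle (by linarith)) (hlt1 μ _ hMle (by rw [hμ]; linarith))
    (hlt σ μ _ _ hNle hMle (by rw [hμ]; linarith)) (hlt μ μ _ _ hMle hMle (by rw [hμ]; linarith))
    (aux_NN hp.one_lt hNle hM1 hMge (by rw [hμ]; linarith))
    (by
      intro n hn0 hnp
      apply Nat.le_floor
      apply aux_divisors L hL n hn0
      have h1 : (n : ℝ) ≤ (p : ℝ) ^ 2 := by exact_mod_cast hnp
      have h2 := Real.log_le_log (by exact_mod_cast Nat.pos_of_ne_zero hn0) h1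
      rw [Real.log_pow] at h2
      exact_mod_cast h2)
    (fun s => ⌊(p : ℝ) ^ ((1 : ℝ) / (k s))⌋₊)
    (fun s => hlt1 _ _ (hn s).2.2 (hk1 s))
    (fun s => by
      have h1 := pow_le_pow_left₀ (Nat.cast_nonneg _) (hn s).2.2 (k s)
      rw [← Real.rpow_natCast ((p : ℝ) ^ ((1 : ℝ) / (k s))), ← Real.rpow_mul hP0.le,
        one_div_mul_cancel (by exact_mod_cast (hk s).ne'), Real.rpow_one] at h1
      exact_mod_cast h1)
    ((19 - 4 * σ) / 10)
    (fun s => by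
      have h := aux_he hP1.le hμ0.le (by rw [hμ]; linarith) (Nat.cast_nonneg _) hMle
        (Nat.cast_nonneg _) (hn s).2.1
      rwa [show 1 + 2 * μ = (19 - 4 * σ) / 10 by rw [hμ]; ring] at h)
    Q Q₀ I
    (by
      rw [hQ]
      ext z
      constructor
      · rintro ⟨x, hx, rfl⟩
        have h := fun i => aux_int_icc (by positivity) (x i) (hx i)
        refine ⟨fun i => (x i).toNat, ?_, ?_⟩
        · rw [Finset.mem_coe, auxBox, Fintype.mem_piFinset]
          exact fun i => (h i).1
        · simp only
          rw [aux_aeval_Q]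
          refine Finset.sum_congr rfl fun i _ => ?_
          rw [← Int.cast_natCast, (h i).2]
      · rintro ⟨x, hx, rfl⟩
        rw [Finset.mem_coe, auxBox, Fintype.mem_piFinset] at hx
        refine ⟨fun i => (x i : ℤ), fun i => aux_nat_icc (by positivity) _ (hx i), ?_⟩
        simp only
        rw [aux_aeval_Q]
        simp)
    (by
      rw [hQ₀]
      ext z
      constructor
      · rintro ⟨y₀, y₁, h0, h1, rfl⟩
        have g0 := aux_int_icc (by positivity) y₀ h0
        have g1 := aux_int_icc (by positivity) y₁ h1
        refine ⟨(y₀.toNat, y₁.toNat), ?_, ?_⟩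
        · rw [Finset.mem_coe, auxPair, Finset.mem_product]
          exact ⟨g0.1, g1.1⟩
        · simp only
          rw [aux_aeval_L]
          simp only
          rw [← Int.cast_natCast, ← Int.cast_natCast (R := F) y₁.toNat, g0.2, g1.2]
      · rintro ⟨y, hy, rfl⟩
        rw [Finset.mem_coe, auxPair, Finset.mem_product] at hy
        refine ⟨y.1, y.2, aux_nat_icc (by positivity) _ hy.1,
          aux_nat_icc (by positivity) _ hy.2, ?_⟩
        simp only
        rw [aux_aeval_L]
        simp)
    (by
      intro s
      rw [hI s]
      ext z
      constructor
      · rintro ⟨y, h0, rfl⟩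
        have g0 := aux_int_icc (by positivity) y h0
        refine ⟨y.toNat, Finset.mem_coe.2 g0.1, ?_⟩
        simp only
        rw [← Int.cast_natCast, g0.2]
      · rintro ⟨y, hy, rfl⟩
        exact ⟨y, aux_nat_icc (by positivity) _ (Finset.mem_coe.1 hy), by simp⟩)
  refine hcore.trans ?_
  have hc := aux_const K _ _ L (Real.log L) w hK1 (Nat.cast_nonneg _) hlL hlL' hTle rfl
  refine mul_le_mul_of_nonneg_right (mul_le_mul_of_nonneg_right (mul_le_mul_of_nonneg_right hc
    (Nat.cast_nonneg _)) (Nat.cast_nonneg _)) ?_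
  exact Finset.prod_nonneg fun s _ => Real.rpow_nonneg (Nat.cast_nonneg _) _
end

section
/- For every integer k ≥ 1 there is a constant c > 0 such that the following holds for all sufficiently large primes p. Let λ₁ ∈ F_p, let λ₂, λ₃ ∈ F_p be such that X² + λ₂X + λ₃ is irreducible over F_p with roots ω₂, ω₃ ∈ F_{p²}, let I, J ⊆ [1, p−1] be intervals of integers with p^{3/8} ≤ |I|, |J| < p^{1/2}, let I₀ be the set of integers in [1, p^{3/8}/4], and let K be the set of integers in [1, p^{3/(2k)}]. Then the number of tuples (x, y, x₀, y₀, s, x', y', x₀', y₀', s') ∈ (I × J × I₀ × I₀ × K)² such that, for each μ ∈ {λ₁, ω₂, ω₃}, s(x − μy)(x₀ − μy₀) = s'(x' − μy')(x₀' − μy₀') with all these factors nonzero, is at most exp(c · log p / log log p) · p^{3/k} · (|I||J|)^{2 − 1/k}. -/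
open Finset Polynomial

lemma aux_det (m n x0 x1 x2 y0 y1 y2 : ℤ) (hx0 : 0 ≤ x0) (hx0' : x0 ≤ m) (hx1 : 0 ≤ x1) (hx1' : x1 ≤ m)
    (hx2 : 0 ≤ x2) (hx2' : x2 ≤ m) (hy0 : 0 ≤ y0) (hy0' : y0 ≤ n) (hy1 : 0 ≤ y1) (hy1' : y1 ≤ n)
    (hy2 : 0 ≤ y2) (hy2' : y2 ≤ n) :
    (x1 - x0) * (y2 - y0) - (x2 - x0) * (y1 - y0) ≤ m * n := by
  have hm : 0 ≤ m := by linarith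
  have key : ∀ c x : ℤ, 0 ≤ x → x ≤ m → x * c ≤ m * max c 0 := by
    intro c x h1 h2
    rcases le_total c 0 with h | h
    · rw [max_eq_right h]; nlinarith
    · rw [max_eq_left h]; nlinarith
  have e : (x1 - x0) * (y2 - y0) - (x2 - x0) * (y1 - y0)
      = x0 * (y1 - y2) + x1 * (y2 - y0) + x2 * (y0 - y1) := by ring
  rw [e]
  have k0 := key (y1 - y2) x0 hx0 hx0'
  have k1 := key (y2 - y0) x1 hx1 hx1'
  have k2 := key (y0 - y1) x2 hx2 hx2'
  have k3 : max (y1 - y2) 0 + max (y2 - y0) 0 + max (y0 - y1) 0 ≤ n := by omega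
  nlinarith

lemma aux_sep (S : Finset ℤ) (a b d : ℤ) (hd : 1 ≤ d) (hS : S ⊆ Finset.Icc a b) (hab : a ≤ b)
    (h : ∀ x ∈ S, ∀ y ∈ S, x ≠ y → d ≤ |x - y|) : ((S.card : ℤ) - 1) * d ≤ b - a := by
  have hc : S.card ≤ (Finset.Icc 0 ((b - a) / d)).card := by
    apply Finset.card_le_card_of_injOn (fun x => (x - a) / d)
    · intro x hx
      have := Finset.mem_Icc.1 (hS hx)
      simp only [Finset.coe_Icc, Set.mem_Icc]
      exact ⟨Int.ediv_nonneg (by linarith) (by linarith), Int.ediv_le_ediv (by linarith) (by linarith)⟩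
    · intro x hx y hy hxy
      by_contra hne
      have h1 := h x hx y hy hne
      simp only at hxy
      have e1 := Int.emod_add_mul_ediv (x - a) d
      have e2 := Int.emod_add_mul_ediv (y - a) d
      rw [hxy] at e1
      have := Int.emod_nonneg (x - a) (by linarith : d ≠ 0)
      have := Int.emod_nonneg (y - a) (by linarith : d ≠ 0)
      have := Int.emod_lt_of_pos (x - a) (by linarith : 0 < d)
      have := Int.emod_lt_of_pos (y - a) (by linarith : 0 < d)
      have : |x - y| < d := by rw [abs_lt]; constructor <;> linarith
      linarith
  rw [Int.card_Icc] at hc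
  have h0 : 0 ≤ (b - a) / d := Int.ediv_nonneg (by linarith) (by linarith)
  have h2 : (S.card : ℤ) - 1 ≤ (b - a) / d := by omega
  calc _ ≤ (b - a) / d * d := by gcongr
    _ ≤ b - a := Int.ediv_mul_le _ (by linarith)

/-- points of the box with ratio `l` -/
noncomputable def rep (p : ℕ) (A B : Finset ℤ) (l : ZMod p) : Finset (ℤ × ℤ) :=
  (A ×ˢ B).filter (fun q => (q.1 : ZMod p) = l * (q.2 : ZMod p))

lemma icast_ne {p : ℕ} {x : ℤ} (h1 : x ≠ 0) (h2 : |x| < p) : (x : ZMod p) ≠ 0 := by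
  intro h
  rw [ZMod.intCast_zmod_eq_zero_iff_dvd] at h
  exact h1 (Int.eq_zero_of_abs_lt_dvd h h2)

lemma icast_inj {p : ℕ} {x y : ℤ} (h2 : |x - y| < p) (h : (x : ZMod p) = y) : x = y := by
  by_contra hne
  exact icast_ne (sub_ne_zero.2 hne) h2 (by push_cast; rw [h, sub_self])

lemma aux_class (p : ℕ) [Fact p.Prime] (a b a' b' : ℤ) (ha : 1 ≤ a) (hb : b ≤ p - 1)
    (ha' : 1 ≤ a') (hb' : b' ≤ p - 1) (hM : (b + 1 - a) * (b' + 1 - a') ≤ p) (l : ZMod p)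
    (h2 : 2 ≤ (rep p (Finset.Icc a b) (Finset.Icc a' b') l).card) :
    ∃ u v : ℤ, 1 ≤ u ∧ u ≤ b - a ∧ v ≠ 0 ∧ |v| ≤ b' - a' ∧ (u : ZMod p) = l * v ∧
      ((rep p (Finset.Icc a b) (Finset.Icc a' b') l).card : ℤ) ^ 2 * (u * |v|) ≤
        4 * ((b + 1 - a) * (b' + 1 - a')) := by
  set R := rep p (Finset.Icc a b) (Finset.Icc a' b') l with hR
  have mem : ∀ q ∈ R, (a ≤ q.1 ∧ q.1 ≤ b) ∧ (a' ≤ q.2 ∧ q.2 ≤ b') ∧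
      (q.1 : ZMod p) = l * (q.2 : ZMod p) := by
    intro q hq
    simp only [hR, rep, Finset.mem_filter, Finset.mem_product, Finset.mem_Icc] at hq
    tauto
  have injY : ∀ q ∈ R, ∀ q' ∈ R, q.2 = q'.2 → q = q' := by
    intro q hq q' hq' h
    obtain ⟨h1, h2, h3⟩ := mem q hq
    obtain ⟨h1', h2', h3'⟩ := mem q' hq'
    refine Prod.ext (icast_inj (p := p) (by rw [abs_lt]; constructor <;> linarith) ?_) h
    rw [h3, h3', h]
  have injX : ∀ q ∈ R, ∀ q' ∈ R, q.1 = q'.1 → q = q' := by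
    intro q hq q' hq' h
    obtain ⟨h1, h2, h3⟩ := mem q hq
    obtain ⟨h1', h2', h3'⟩ := mem q' hq'
    refine Prod.ext h (icast_inj (p := p) (by rw [abs_lt]; constructor <;> linarith) ?_)
    have hl : l ≠ 0 := by
      rintro rfl
      rw [zero_mul] at h3
      exact icast_ne (p := p) (by linarith) (by rw [abs_lt]; constructor <;> linarith) h3
    rw [h, h3'] at h3
    exact (mul_left_cancel₀ hl h3).symm
  have col : ∀ q ∈ R, ∀ r ∈ R, ∀ s ∈ R,
      (r.1 - q.1) * (s.2 - q.2) - (s.1 - q.1) * (r.2 - q.2) = 0 := by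
    intro q hq r hr s hs
    obtain ⟨h1, h2, h3⟩ := mem q hq
    obtain ⟨h1', h2', h3'⟩ := mem r hr
    obtain ⟨h1'', h2'', h3''⟩ := mem s hs
    have b1 := aux_det (b - a) (b' - a') (q.1 - a) (r.1 - a) (s.1 - a) (q.2 - a') (r.2 - a') (s.2 - a')
      (by linarith) (by linarith) (by linarith) (by linarith) (by linarith) (by linarith) (by linarith)
      (by linarith) (by linarith) (by linarith) (by linarith) (by linarith)
    have b2 := aux_det (b - a) (b' - a') (q.1 - a) (s.1 - a) (r.1 - a) (q.2 - a') (s.2 - a') (r.2 - a')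
      (by linarith) (by linarith) (by linarith) (by linarith) (by linarith) (by linarith) (by linarith)
      (by linarith) (by linarith) (by linarith) (by linarith) (by linarith)
    have b3 : (b - a) * (b' - a') < p := by nlinarith
    apply Int.eq_zero_of_abs_lt_dvd (m := (p : ℤ))
    · rw [← ZMod.intCast_zmod_eq_zero_iff_dvd]
      push_cast
      rw [h3, h3', h3'']; ring
    · rw [abs_lt]; constructor <;> nlinarith
  -- minimal pair
  have hne : (R.offDiag.filter (fun t => t.2.1 < t.1.1)).Nonempty := by
    obtain ⟨q, hq, r, hr, hqr⟩ := Finset.one_lt_card.1 (by omega : 1 < R.card)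
    have : q.1 ≠ r.1 := fun h => hqr (injX q hq r hr h)
    rcases lt_or_gt_of_ne this with h | h
    · exact ⟨(r, q), by simp [hq, hr, hqr.symm, h]⟩
    · exact ⟨(q, r), by simp [hq, hr, hqr, h]⟩
  obtain ⟨⟨P, Q⟩, hPQ, hmin⟩ := Finset.exists_min_image _ (fun t => t.1.1 - t.2.1) hne
  simp only [Finset.mem_filter, Finset.mem_offDiag] at hPQ hmin
  obtain ⟨⟨hP, hQ, hneq⟩, hlt⟩ := hPQ
  have sepX : ∀ q ∈ R, ∀ r ∈ R, q ≠ r → P.1 - Q.1 ≤ |q.1 - r.1| := by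
    intro q hq r hr hqr
    have : q.1 ≠ r.1 := fun h => hqr (injX q hq r hr h)
    rcases lt_or_gt_of_ne this with h | h
    · have := hmin (r, q) ⟨⟨hr, hq, hqr.symm⟩, h⟩
      simp only at this
      rw [abs_of_neg (by linarith)]; linarith
    · have := hmin (q, r) ⟨⟨hq, hr, hqr⟩, h⟩
      simp only at this
      rw [abs_of_pos (by linarith)]; linarith
  have sepY : ∀ q ∈ R, ∀ r ∈ R, q ≠ r → |P.2 - Q.2| ≤ |q.2 - r.2| := by
    intro q hq r hr hqr
    have h1 := sepX q hq r hr hqr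
    have c1 := col P hP Q hQ q hq
    have c2 := col P hP Q hQ r hr
    have c3 : (P.1 - Q.1) * (q.2 - r.2) = (q.1 - r.1) * (P.2 - Q.2) := by linarith
    have c4 := congrArg abs c3
    rw [abs_mul, abs_mul, abs_of_pos (by linarith : 0 < P.1 - Q.1)] at c4
    have : (P.1 - Q.1) * |P.2 - Q.2| ≤ (P.1 - Q.1) * |q.2 - r.2| := by
      rw [c4]; gcongr
    exact le_of_mul_le_mul_left this (by linarith)
  have hv : P.2 - Q.2 ≠ 0 := fun h => hneq (injY P hP Q hQ (by linarith))
  obtain ⟨p1, p2, p3⟩ := mem P hP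
  obtain ⟨q1, q2, q3⟩ := mem Q hQ
  have hv1 : 1 ≤ |P.2 - Q.2| := Int.one_le_abs hv
  refine ⟨P.1 - Q.1, P.2 - Q.2, by linarith, by linarith, hv, ?_, ?_, ?_⟩
  · rw [abs_le]; constructor <;> linarith
  · push_cast; rw [p3, q3]; ring
  · have cX : (R.image Prod.fst).card = R.card := Finset.card_image_of_injOn (fun q hq r hr h => injX q hq r hr h)
    have cY : (R.image Prod.snd).card = R.card := Finset.card_image_of_injOn (fun q hq r hr h => injY q hq r hr h)
    have sX := aux_sep (R.image Prod.fst) a b (P.1 - Q.1) (by linarith)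
      (by intro x hx; obtain ⟨q, hq, rfl⟩ := Finset.mem_image.1 hx; exact Finset.mem_Icc.2 (mem q hq).1)
      (by linarith)
      (by
        intro x hx y hy hxy
        obtain ⟨q, hq, rfl⟩ := Finset.mem_image.1 hx
        obtain ⟨r, hr, rfl⟩ := Finset.mem_image.1 hy
        exact sepX q hq r hr (fun h => hxy (by rw [h])))
    have sY := aux_sep (R.image Prod.snd) a' b' |P.2 - Q.2| hv1
      (by intro x hx; obtain ⟨q, hq, rfl⟩ := Finset.mem_image.1 hx; exact Finset.mem_Icc.2 (mem q hq).2.1)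
      (by linarith)
      (by
        intro x hx y hy hxy
        obtain ⟨q, hq, rfl⟩ := Finset.mem_image.1 hx
        obtain ⟨r, hr, rfl⟩ := Finset.mem_image.1 hy
        exact sepY q hq r hr (fun h => hxy (by rw [h])))
    rw [cX] at sX
    rw [cY] at sY
    set u := P.1 - Q.1
    set v := |P.2 - Q.2|
    have hu : 0 < u := by simp only [u]; linarith
    have h2' : (2 : ℤ) ≤ R.card := by exact_mod_cast h2
    have tX : (R.card : ℤ) * u ≤ 2 * (b + 1 - a) := by nlinarith
    have tY : (R.card : ℤ) * v ≤ 2 * (b' + 1 - a') := by nlinarith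
    calc (R.card : ℤ) ^ 2 * (u * v) = (R.card * u) * (R.card * v) := by ring
      _ ≤ (2 * (b + 1 - a)) * (2 * (b' + 1 - a')) := by
        apply mul_le_mul tX tY (by positivity) (by linarith)
      _ = _ := by ring

lemma harm_le (p : ℕ) (n : ℕ) (hn : n ≤ p) :
    ∑ i ∈ Finset.Icc 1 n, (1 / (i : ℝ)) ≤ 1 + Real.log p := by
  have h := harmonic_le_one_add_log n
  rw [harmonic_eq_sum_Icc] at h
  push_cast at h
  simp only [one_div]
  refine h.trans ?_
  rcases Nat.eq_zero_or_pos n with rfl | h0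
  · simp; positivity
  · gcongr

lemma energy (p : ℕ) [Fact p.Prime] (a b a' b' : ℤ) (ha : 1 ≤ a) (hb : b ≤ p - 1)
    (ha' : 1 ≤ a') (hb' : b' ≤ p - 1) (hab : a ≤ b) (hab' : a' ≤ b')
    (hM : (b + 1 - a) * (b' + 1 - a') ≤ p) :
    ∑ l : ZMod p, ((rep p (Finset.Icc a b) (Finset.Icc a' b') l).card : ℝ) ^ 2 ≤
      (((Finset.Icc a b).card : ℝ) * ((Finset.Icc a' b').card : ℝ)) *
        (1 + 8 * (1 + Real.log p) ^ 2) := by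
  classical
  have hp1 : 1 ≤ p := (Fact.out : p.Prime).one_lt.le
  set A := Finset.Icc a b with hA
  set B := Finset.Icc a' b' with hB
  have cA : (A.card : ℤ) = b + 1 - a := by rw [hA, Int.card_Icc]; omega
  have cB : (B.card : ℤ) = b' + 1 - a' := by rw [hB, Int.card_Icc]; omega
  have cAp : A.card ≤ p := by omega
  have cBp : B.card ≤ p := by omega
  set r : ZMod p → ℕ := fun l => (rep p A B l).card with hr
  have hsum : ∑ l, r l ≤ A.card * B.card := by
    rw [← Finset.card_product]
    simp only [hr, rep]
    have := Finset.card_eq_sum_card_fiberwise (s := A ×ˢ B) (t := (Finset.univ : Finset (ZMod p)))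
      (f := fun q => (q.1 : ZMod p) / (q.2 : ZMod p)) (by intro x _; simp)
    rw [this]
    apply Finset.sum_le_sum
    intro l _
    apply Finset.card_le_card
    intro q hq
    simp only [Finset.mem_filter, Finset.mem_product, hB, Finset.mem_Icc] at hq ⊢
    refine ⟨hq.1, ?_⟩
    rw [hq.2, mul_div_assoc, div_self, mul_one]
    exact icast_ne (by linarith) (by rw [abs_lt]; constructor <;> linarith)
  set S := Finset.univ.filter (fun l : ZMod p => 2 ≤ r l) with hS
  have hcl : ∀ l ∈ S, ∃ t : ℕ × ℕ × ℤ, t ∈ (Finset.Icc 1 A.card ×ˢ Finset.Icc 1 B.card ×ˢ ({1, -1} : Finset ℤ)) ∧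
      (t.1 : ZMod p) = l * ((t.2.2 * t.2.1 : ℤ) : ZMod p) ∧ ((t.2.2 * t.2.1 : ℤ) : ZMod p) ≠ 0 ∧
      (r l : ℝ) ^ 2 ≤ 4 * (A.card * B.card) * ((1 / (t.1 : ℝ)) * (1 / (t.2.1 : ℝ))) := by
    intro l hl
    obtain ⟨u, v, hu, hu', hv, hv', huv, hle⟩ := aux_class p a b a' b' ha hb ha' hb' hM l
      (by simpa [hS] using hl)
    have hsv : v.sign * (v.natAbs : ℤ) = v := Int.sign_mul_natAbs v
    have hva : (v.natAbs : ℤ) = |v| := Int.natCast_natAbs v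
    refine ⟨(u.toNat, v.natAbs, v.sign), ?_, ?_, ?_, ?_⟩
    · simp only [Finset.mem_product, Finset.mem_Icc, Finset.mem_insert, Finset.mem_singleton]
      refine ⟨by omega, by omega, ?_⟩
      rcases lt_or_gt_of_ne hv with h | h
      · right; exact Int.sign_eq_neg_one_of_neg h
      · left; exact Int.sign_eq_one_of_pos h
    · simp only [hsv]
      rw [← huv]
      have : ((u.toNat : ℤ) : ZMod p) = (u : ZMod p) := by rw [Int.toNat_of_nonneg (by linarith)]
      exact_mod_cast this
    · simp only [hsv]
      exact icast_ne hv (by linarith)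
    · have e1 : ((u.toNat : ℕ) : ℝ) = (u : ℝ) := by
        have : ((u.toNat : ℤ) : ℝ) = (u : ℝ) := by rw [Int.toNat_of_nonneg (by linarith)]
        exact_mod_cast this
      have e2 : ((v.natAbs : ℕ) : ℝ) = ((|v| : ℤ) : ℝ) := by rw [← hva]; simp
      simp only [e1, e2]
      rw [← cA, ← cB] at hle
      have hle' : (r l : ℝ) ^ 2 * ((u : ℝ) * ((|v| : ℤ) : ℝ)) ≤ 4 * (A.card * B.card) := by
        exact_mod_cast hle
      have hup : (0 : ℝ) < u := by exact_mod_cast (by linarith : 0 < u)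
      have hvp : (0 : ℝ) < ((|v| : ℤ) : ℝ) := by exact_mod_cast abs_pos.2 hv
      rw [one_div_mul_one_div, mul_one_div, le_div_iff₀ (by positivity)]
      exact hle'
  choose! f hf1 hf2 hf3 hf4 using hcl
  have finj : Set.InjOn f S := by
    intro l hl l' hl' h
    have h1 := hf2 l hl
    have h2 := hf2 l' hl'
    rw [← h, h1] at h2
    exact mul_right_cancel₀ (hf3 l hl) h2
  have hSsum : ∑ l ∈ S, (r l : ℝ) ^ 2 ≤ (A.card * B.card) * (8 * (1 + Real.log p) ^ 2) := by
    calc ∑ l ∈ S, (r l : ℝ) ^ 2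
        ≤ ∑ l ∈ S, 4 * ((A.card : ℝ) * B.card) * ((1 / ((f l).1 : ℝ)) * (1 / ((f l).2.1 : ℝ))) :=
          Finset.sum_le_sum hf4
      _ = ∑ t ∈ S.image f, 4 * ((A.card : ℝ) * B.card) * ((1 / (t.1 : ℝ)) * (1 / (t.2.1 : ℝ))) := by
          rw [Finset.sum_image finj]
      _ ≤ ∑ t ∈ (Finset.Icc 1 A.card ×ˢ Finset.Icc 1 B.card ×ˢ ({1, -1} : Finset ℤ)),
            4 * ((A.card : ℝ) * B.card) * ((1 / (t.1 : ℝ)) * (1 / (t.2.1 : ℝ))) := by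
          apply Finset.sum_le_sum_of_subset_of_nonneg
          · intro t ht
            obtain ⟨l, hl, rfl⟩ := Finset.mem_image.1 ht
            exact hf1 l hl
          · intros; positivity
      _ = 4 * ((A.card : ℝ) * B.card) * (2 * ((∑ i ∈ Finset.Icc 1 A.card, (1 / (i : ℝ))) *
            (∑ i ∈ Finset.Icc 1 B.card, (1 / (i : ℝ))))) := by
          rw [← Finset.mul_sum, Finset.sum_product, Finset.sum_mul_sum]
          congr 1
          rw [Finset.mul_sum]
          apply Finset.sum_congr rfl
          intro i _
          rw [Finset.sum_product, Finset.mul_sum]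
          apply Finset.sum_congr rfl
          intro j _
          rw [Finset.sum_pair (by norm_num)]
          ring
      _ ≤ 4 * ((A.card : ℝ) * B.card) * (2 * ((1 + Real.log p) * (1 + Real.log p))) := by
          have hl0 : 0 ≤ Real.log p := Real.log_natCast_nonneg p
          gcongr
          · exact harm_le p _ cAp
          · exact harm_le p _ cBp
      _ = _ := by ring
  have hpt : ∀ l : ZMod p, (r l : ℝ) ^ 2 ≤ r l + if 2 ≤ r l then (r l : ℝ) ^ 2 else 0 := by
    intro l
    split_ifs with h
    · have : (0 : ℝ) ≤ r l := by positivity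
      linarith
    · have : r l = 0 ∨ r l = 1 := by omega
      rcases this with h | h <;> simp [h]
  calc ∑ l, (r l : ℝ) ^ 2 ≤ ∑ l, ((r l : ℝ) + if 2 ≤ r l then (r l : ℝ) ^ 2 else 0) :=
        Finset.sum_le_sum (fun l _ => hpt l)
    _ = ∑ l, (r l : ℝ) + ∑ l ∈ S, (r l : ℝ) ^ 2 := by
        rw [Finset.sum_add_distrib, hS, Finset.sum_filter]
    _ ≤ (A.card * B.card) + (A.card * B.card) * (8 * (1 + Real.log p) ^ 2) := by
        gcongr
        exact_mod_cast hsum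
    _ = _ := by ring

/-- pairs of points with the same ratio -/
noncomputable def prs (p : ℕ) [Fact p.Prime] (A B A' B' : Finset ℤ) : Finset ((ℤ × ℤ) × (ℤ × ℤ)) :=
  Finset.univ.biUnion (fun l : ZMod p => rep p A B l ×ˢ rep p A' B' l)

lemma prs_card (p : ℕ) [Fact p.Prime] (A B A' B' : Finset ℤ) :
    ((prs p A B A' B').card : ℝ) ≤
      ∑ l : ZMod p, ((rep p A B l).card : ℝ) * ((rep p A' B' l).card : ℝ) := by
  have h : (prs p A B A' B').card ≤ ∑ l : ZMod p, (rep p A B l).card * (rep p A' B' l).card := by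
    refine Finset.card_biUnion_le.trans (le_of_eq ?_)
    simp [Finset.card_product]
  exact_mod_cast h

lemma mem_prs (p : ℕ) [Fact p.Prime] (A B A' B' : Finset ℤ) (x y x' y' : ℤ) (hx : x ∈ A) (hy : y ∈ B)
    (hx' : x' ∈ A') (hy' : y' ∈ B') (h0 : (y : ZMod p) ≠ 0)
    (h : (x : ZMod p) * y' = x' * y) : ((x, y), (x', y')) ∈ prs p A B A' B' := by
  simp only [prs, rep, Finset.mem_biUnion, Finset.mem_univ, true_and, Finset.mem_product,
    Finset.mem_filter]
  refine ⟨(x : ZMod p) / y, ⟨⟨hx, hy⟩, by field_simp⟩, ⟨hx', hy'⟩, ?_⟩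
  field_simp
  exact h.symm

lemma fib_s (p : ℕ) [Fact p.Prime] (κ : ℤ) (α β : ZMod p) (hα : α ≠ 0) :
    ((Finset.Icc 1 κ ×ˢ Finset.Icc 1 κ).filter
      (fun t : ℤ × ℤ => (t.1 : ZMod p) * α = t.2 * β)).card ≤ (κ.toNat / p + 1) * κ.toNat := by
  classical
  have hp0 : 0 < p := (Fact.out : p.Prime).pos
  have h := Finset.card_le_mul_card_image_of_maps_to (s := ((Finset.Icc 1 κ ×ˢ Finset.Icc 1 κ).filter
      (fun t : ℤ × ℤ => (t.1 : ZMod p) * α = t.2 * β))) (t := Finset.Icc 1 κ) (f := Prod.snd)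
      (by intro t ht; simp only [Finset.mem_filter, Finset.mem_product] at ht; exact ht.1.2)
      (κ.toNat / p + 1) ?_
  · simpa using h
  intro s' hs'
  have hκ : 1 ≤ κ := by rw [Finset.mem_Icc] at hs'; linarith
  set F := (((Finset.Icc 1 κ ×ˢ Finset.Icc 1 κ).filter
      (fun t : ℤ × ℤ => (t.1 : ZMod p) * α = t.2 * β))).filter (fun t => t.2 = s') with hF
  have mem : ∀ t ∈ F, (1 ≤ t.1 ∧ t.1 ≤ κ) ∧ t.2 = s' ∧ (t.1 : ZMod p) * α = s' * β := by
    intro t ht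
    simp only [hF, Finset.mem_filter, Finset.mem_product, Finset.mem_Icc] at ht
    obtain ⟨⟨⟨h1, h2⟩, h3⟩, h4⟩ := ht
    exact ⟨h1, h4, by rw [← h4]; exact h3⟩
  have hc : (F.image Prod.fst).card = F.card := by
    apply Finset.card_image_of_injOn
    intro t ht t' ht' h
    exact Prod.ext h ((mem t ht).2.1.trans (mem t' ht').2.1.symm)
  have hsep := aux_sep (F.image Prod.fst) 1 κ p (by exact_mod_cast hp0)
    (by intro x hx; obtain ⟨t, ht, rfl⟩ := Finset.mem_image.1 hx; exact Finset.mem_Icc.2 (mem t ht).1)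
    hκ
    (by
      intro x hx y hy hxy
      obtain ⟨t, ht, rfl⟩ := Finset.mem_image.1 hx
      obtain ⟨t', ht', rfl⟩ := Finset.mem_image.1 hy
      by_contra hlt
      push Not at hlt
      refine hxy (icast_inj (p := p) hlt ?_)
      exact mul_right_cancel₀ hα ((mem t ht).2.2.trans (mem t' ht').2.2.symm))
  rw [hc] at hsep
  have h1 : (F.card - 1) * p ≤ κ.toNat := by
    rcases Nat.eq_zero_or_pos F.card with h0 | h0
    · rw [h0]; simp
    · zify [h0]
      rw [Int.toNat_of_nonneg (by linarith)]
      linarith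
  have h2 := (Nat.le_div_iff_mul_le hp0).2 h1
  omega

lemma alg_key (p : ℕ) [Fact p.Prime] (E : Type) [Field E] [Algebra (ZMod p) E]
    (lam₁ lam₂ lam₃ : ZMod p) (ω₂ ω₃ : E)
    (hirr : Irreducible (X ^ 2 + C lam₂ * X + C lam₃ : Polynomial (ZMod p)))
    (h2 : ω₂ ^ 2 + algebraMap (ZMod p) E lam₂ * ω₂ + algebraMap (ZMod p) E lam₃ = 0)
    (h3 : ω₃ ^ 2 + algebraMap (ZMod p) E lam₂ * ω₃ + algebraMap (ZMod p) E lam₃ = 0)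
    (hne : ω₂ ≠ ω₃) (x y x0 y0 s x' y' x0' y0' s' : ZMod p)
    (hs : s ≠ 0) (hy : y ≠ 0) (hy0 : y0 ≠ 0) (hy' : y' ≠ 0) (hy0' : y0' ≠ 0)
    (e1 : s * (x - lam₁ * y) * (x0 - lam₁ * y0) = s' * (x' - lam₁ * y') * (x0' - lam₁ * y0'))
    (e2 : (algebraMap (ZMod p) E s) * (algebraMap (ZMod p) E x - ω₂ * algebraMap (ZMod p) E y) *
      (algebraMap (ZMod p) E x0 - ω₂ * algebraMap (ZMod p) E y0) =
      (algebraMap (ZMod p) E s') * (algebraMap (ZMod p) E x' - ω₂ * algebraMap (ZMod p) E y') *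
      (algebraMap (ZMod p) E x0' - ω₂ * algebraMap (ZMod p) E y0'))
    (e3 : (algebraMap (ZMod p) E s) * (algebraMap (ZMod p) E x - ω₃ * algebraMap (ZMod p) E y) *
      (algebraMap (ZMod p) E x0 - ω₃ * algebraMap (ZMod p) E y0) =
      (algebraMap (ZMod p) E s') * (algebraMap (ZMod p) E x' - ω₃ * algebraMap (ZMod p) E y') *
      (algebraMap (ZMod p) E x0' - ω₃ * algebraMap (ZMod p) E y0')) :
    (x * y' = x' * y ∧ x0 * y0' = x0' * y0) ∨ (x * y0' = x0' * y ∧ x' * y0 = x0 * y') := by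
  have hroot : ∀ w : E, w ^ 2 + algebraMap (ZMod p) E lam₂ * w + algebraMap (ZMod p) E lam₃ = 0 →
      w ≠ algebraMap (ZMod p) E lam₁ := by
    rintro w hw rfl
    have h0 : lam₁ ^ 2 + lam₂ * lam₁ + lam₃ = 0 := by
      apply (algebraMap (ZMod p) E).injective
      simpa using hw
    have hdeg : (X ^ 2 + C lam₂ * X + C lam₃ : Polynomial (ZMod p)).natDegree = 2 := by
      compute_degree!
    have := Polynomial.degree_eq_one_of_irreducible_of_root hirr (x := lam₁) (by
      simpa [Polynomial.IsRoot] using h0)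
    rw [Polynomial.degree_eq_natDegree hirr.ne_zero, hdeg] at this
    norm_num at this
  have n2 := hroot ω₂ h2
  have n3 := hroot ω₃ h3
  have e1' := congrArg (algebraMap (ZMod p) E) e1
  simp only [map_mul, map_sub] at e1'
  set φ := algebraMap (ZMod p) E
  -- coefficients of the difference quadratic `a μ² + b μ + c`
  obtain ⟨a, ha⟩ : ∃ a, a = s * y * y0 - s' * y' * y0' := ⟨_, rfl⟩
  obtain ⟨b, hb⟩ : ∃ b, b = s * (x * y0 + x0 * y) - s' * (x' * y0' + x0' * y') := ⟨_, rfl⟩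
  obtain ⟨c, hc⟩ : ∃ c, c = s * x * x0 - s' * x' * x0' := ⟨_, rfl⟩
  have q : ∀ w : E, φ s * (φ x - w * φ y) * (φ x0 - w * φ y0) =
      φ s' * (φ x' - w * φ y') * (φ x0' - w * φ y0') → φ a * w ^ 2 - φ b * w + φ c = 0 := by
    intro w hw
    rw [ha, hb, hc]
    simp only [map_mul, map_sub, map_add]
    linear_combination hw
  have q1 := q _ e1'
  have q2 := q _ e2
  have q3 := q _ e3
  have f1 : φ a * (ω₂ + φ lam₁) - φ b = 0 := by
    apply mul_left_cancel₀ (sub_ne_zero.2 n2)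
    linear_combination q2 - q1
  have f2 : φ a * (ω₃ + φ lam₁) - φ b = 0 := by
    apply mul_left_cancel₀ (sub_ne_zero.2 n3)
    linear_combination q3 - q1
  have fa : φ a = 0 := by
    apply mul_left_cancel₀ (sub_ne_zero.2 hne)
    linear_combination f1 - f2
  have fb : φ b = 0 := by rw [fa] at f1; simpa using f1
  have fc : φ c = 0 := by rw [fa, fb] at q1; simpa using q1
  rw [map_eq_zero] at fa fb fc
  rw [ha] at fa
  rw [hb] at fb
  rw [hc] at fc
  have hz : (x * y' - x' * y) * (x * y0' - x0' * y) = 0 := by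
    have hs' : s' ≠ 0 := by
      rintro rfl
      simp only [zero_mul, sub_zero] at fa
      exact mul_ne_zero (mul_ne_zero hs hy) hy0 fa
    apply mul_left_cancel₀ hs'
    linear_combination (-x ^ 2) * fa + x * y * fb - y ^ 2 * fc
  have hss : s * y * y0 = s' * y' * y0' := by linear_combination fa
  have hs' : s' ≠ 0 := by
    rintro rfl
    simp only [zero_mul] at hss
    exact mul_ne_zero (mul_ne_zero hs hy) hy0 hss
  rcases mul_eq_zero.1 hz with h | h
  · left
    refine ⟨by linear_combination h, ?_⟩
    apply sub_eq_zero.1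
    apply mul_left_cancel₀ (mul_ne_zero (mul_ne_zero hs hy) hy')
    linear_combination (y' * y0') * fb - (x' * y0' + x0' * y') * fa - s * y0 * y0' * h
  · right
    refine ⟨by linear_combination h, ?_⟩
    apply sub_eq_zero.1
    apply mul_left_cancel₀ (mul_ne_zero (mul_ne_zero hs hy) hy0')
    linear_combination -(y' * y0') * fb + (x' * y0' + x0' * y') * fa + s * y0 * y' * h

lemma final_ineq (k : ℕ) (hk : 1 ≤ k) (P N L t κ : ℝ) (hP : 1 ≤ P) (hN : P ^ ((3 : ℝ) / 4) ≤ N)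
    (hL : L ^ 2 / 4 ≤ P ^ ((1 : ℝ) / (4 * k)))
    (hκ0 : 0 ≤ κ) (hκ : κ ≤ P ^ ((3 : ℝ) / (2 * k))) (ht0 : 0 ≤ t) (ht : t ≤ P ^ ((3 : ℝ) / 8) / 4) :
    2 * ((N * L) * (t * t * L)) * ((κ / P + 1) * κ) ≤ P ^ ((3 : ℝ) / k) * N ^ (2 - 1 / (k : ℝ)) := by
  have hP0 : 0 < P := by linarith
  have hk' : (1 : ℝ) ≤ k := by exact_mod_cast hk
  have hk0 : (0 : ℝ) < k := by linarith
  have hN0 : 0 < N := lt_of_lt_of_le (by positivity) hN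
  have h1 : t * t ≤ P ^ ((3 : ℝ) / 4) / 16 := by
    have : P ^ ((3 : ℝ) / 8) * P ^ ((3 : ℝ) / 8) = P ^ ((3 : ℝ) / 4) := by
      rw [← Real.rpow_add hP0]; norm_num
    calc t * t ≤ (P ^ ((3 : ℝ) / 8) / 4) * (P ^ ((3 : ℝ) / 8) / 4) := by gcongr
      _ = _ := by rw [← this]; ring
  have h2 : κ / P + 1 ≤ 2 * P ^ ((1 : ℝ) / (2 * k)) := by
    have a1 : κ / P ≤ P ^ ((1 : ℝ) / (2 * k)) := by
      rw [div_le_iff₀ hP0]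
      refine hκ.trans ?_
      rw [← Real.rpow_add_one hP0.ne']
      apply Real.rpow_le_rpow_of_exponent_le hP
      have : (3 : ℝ) / (2 * k) = 1 / (2 * k) + 1 / k := by field_simp; norm_num
      rw [this]
      have : 1 / (k : ℝ) ≤ 1 := by rw [div_le_one hk0]; exact hk'
      linarith
    have a2 : 1 ≤ P ^ ((1 : ℝ) / (2 * k)) := Real.one_le_rpow hP (by positivity)
    linarith
  have h3 : N ^ (2 - 1 / (k : ℝ)) = N * N ^ (1 - 1 / (k : ℝ)) := by
    rw [mul_comm, ← Real.rpow_add_one hN0.ne']; congr 1; ring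
  have h4 : P ^ ((3 : ℝ) / 4 * (1 - 1 / (k : ℝ))) ≤ N ^ (1 - 1 / (k : ℝ)) := by
    rw [Real.rpow_mul hP0.le]
    apply Real.rpow_le_rpow (by positivity) hN
    have : 1 / (k : ℝ) ≤ 1 := by rw [div_le_one hk0]; exact hk'
    linarith
  have h5 : P ^ ((1 : ℝ) / (4 * k)) * P ^ ((3 : ℝ) / 4) * (P ^ ((1 : ℝ) / (2 * k)) * P ^ ((3 : ℝ) / (2 * k)))
      = P ^ ((3 : ℝ) / k) * P ^ ((3 : ℝ) / 4 * (1 - 1 / (k : ℝ))) := by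
    simp only [← Real.rpow_add hP0]
    congr 1
    field_simp
    ring
  calc 2 * ((N * L) * (t * t * L)) * ((κ / P + 1) * κ)
      = N * (2 * L ^ 2 * (t * t) * ((κ / P + 1) * κ)) := by ring
    _ ≤ N * (2 * L ^ 2 * (P ^ ((3 : ℝ) / 4) / 16) * ((2 * P ^ ((1 : ℝ) / (2 * k))) * P ^ ((3 : ℝ) / (2 * k)))) := by
        gcongr
    _ = N * ((L ^ 2 / 4) * P ^ ((3 : ℝ) / 4) * (P ^ ((1 : ℝ) / (2 * k)) * P ^ ((3 : ℝ) / (2 * k)))) := by ring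
    _ ≤ N * (P ^ ((1 : ℝ) / (4 * k)) * P ^ ((3 : ℝ) / 4) * (P ^ ((1 : ℝ) / (2 * k)) * P ^ ((3 : ℝ) / (2 * k)))) := by
        gcongr
    _ = N * (P ^ ((3 : ℝ) / k) * P ^ ((3 : ℝ) / 4 * (1 - 1 / (k : ℝ)))) := by rw [h5]
    _ ≤ N * (P ^ ((3 : ℝ) / k) * N ^ (1 - 1 / (k : ℝ))) := by gcongr
    _ = _ := by rw [h3]; ring

lemma ev_log (k : ℕ) (hk : 1 ≤ k) : ∃ p₀ : ℕ, 256 ≤ p₀ ∧ ∀ p : ℕ, p₀ < p →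
    (1 + 8 * (1 + Real.log p) ^ 2) ^ 2 / 4 ≤ (p : ℝ) ^ ((1 : ℝ) / (4 * k)) := by
  have hk0 : (0 : ℝ) < k := by exact_mod_cast hk
  have hδ : (0 : ℝ) < 1 / (16 * k) := by positivity
  have h1 := (isLittleO_log_rpow_atTop hδ).def (show (0 : ℝ) < 1 / 6 by norm_num)
  have h2 := (tendsto_rpow_atTop hδ).eventually_ge_atTop 6
  have h3 := ((h1.and h2).and (Filter.eventually_ge_atTop (1 : ℝ)))
  have h4 := tendsto_natCast_atTop_atTop (R := ℝ) |>.eventually h3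
  obtain ⟨n, hn⟩ := Filter.eventually_atTop.1 h4
  refine ⟨max n 256, le_max_right _ _, fun p hp => ?_⟩
  obtain ⟨⟨g1, g2⟩, g3⟩ := hn p (by omega)
  have hlog : 0 ≤ Real.log p := Real.log_nonneg g3
  have hpos : (0 : ℝ) ≤ (p : ℝ) ^ ((1 : ℝ) / (16 * k)) := by positivity
  rw [Real.norm_of_nonneg hlog, Real.norm_of_nonneg hpos] at g1
  have e : (p : ℝ) ^ ((1 : ℝ) / (4 * k)) = ((p : ℝ) ^ ((1 : ℝ) / (16 * k))) ^ 4 := by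
    rw [← Real.rpow_natCast, ← Real.rpow_mul (by positivity)]
    congr 1
    field_simp
    norm_num
  rw [e]
  set z := (p : ℝ) ^ ((1 : ℝ) / (16 * k))
  set y := 1 + Real.log p with hy
  have hy1 : 1 ≤ y := by linarith
  have hyz : 3 * y ≤ z := by linarith
  have h81 : (1 + 8 * y ^ 2) ^ 2 ≤ (9 * y ^ 2) ^ 2 := by
    gcongr; nlinarith
  have hz4 : (3 * y) ^ 4 ≤ z ^ 4 := by gcongr
  have : (9 * y ^ 2) ^ 2 = (3 * y) ^ 4 := by ring
  have : 0 ≤ (3 * y) ^ 4 := by positivity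
  linarith

/-- tuples with fixed pattern -/
lemma fib_bound (p : ℕ) [Fact p.Prime] (lam : ZMod p) (κ : ℤ)
    (U : Finset ((ℤ × ℤ × ℤ × ℤ × ℤ) × (ℤ × ℤ × ℤ × ℤ × ℤ)))
    (hU : ∀ q ∈ U, q.1.2.2.2.2 ∈ Finset.Icc 1 κ ∧ q.2.2.2.2.2 ∈ Finset.Icc 1 κ ∧
      (q.1.2.2.2.2 : ZMod p) * (((q.1.1 : ZMod p) - lam * (q.1.2.1 : ZMod p)) *
                ((q.1.2.2.1 : ZMod p) - lam * (q.1.2.2.2.1 : ZMod p))) =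
              (q.2.2.2.2.2 : ZMod p) * (((q.2.1 : ZMod p) - lam * (q.2.2.1 : ZMod p)) *
                ((q.2.2.2.1 : ZMod p) - lam * (q.2.2.2.2.1 : ZMod p))) ∧
      ((q.1.1 : ZMod p) - lam * (q.1.2.1 : ZMod p)) *
                ((q.1.2.2.1 : ZMod p) - lam * (q.1.2.2.2.1 : ZMod p)) ≠ 0)
    (W : Finset (((ℤ × ℤ) × (ℤ × ℤ)) × ((ℤ × ℤ) × (ℤ × ℤ))))
    (f : (ℤ × ℤ × ℤ × ℤ × ℤ) × (ℤ × ℤ × ℤ × ℤ × ℤ) → ((ℤ × ℤ) × (ℤ × ℤ)) × ((ℤ × ℤ) × (ℤ × ℤ)))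
    (hf : ∀ q q', f q = f q' → q.1.1 = q'.1.1 ∧ q.1.2.1 = q'.1.2.1 ∧ q.1.2.2.1 = q'.1.2.2.1 ∧
      q.1.2.2.2.1 = q'.1.2.2.2.1 ∧ q.2.1 = q'.2.1 ∧ q.2.2.1 = q'.2.2.1 ∧ q.2.2.2.1 = q'.2.2.2.1 ∧
      q.2.2.2.2.1 = q'.2.2.2.2.1)
    (hfW : ∀ q ∈ U, f q ∈ W) :
    U.card ≤ ((κ.toNat / p + 1) * κ.toNat) * W.card := by
  classical
  apply Finset.card_le_mul_card_image_of_maps_to (f := f) hfW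
  intro w hw
  rcases (U.filter (fun q => f q = w)).eq_empty_or_nonempty with h0 | ⟨q0, hq0⟩
  · rw [h0]; simp
  rw [Finset.mem_filter] at hq0
  refine le_trans ?_ (fib_s p κ (((q0.1.1 : ZMod p) - lam * (q0.1.2.1 : ZMod p)) *
                ((q0.1.2.2.1 : ZMod p) - lam * (q0.1.2.2.2.1 : ZMod p)))
                (((q0.2.1 : ZMod p) - lam * (q0.2.2.1 : ZMod p)) *
                ((q0.2.2.2.1 : ZMod p) - lam * (q0.2.2.2.2.1 : ZMod p))) (hU q0 hq0.1).2.2.2)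
  apply Finset.card_le_card_of_injOn (fun q => (q.1.2.2.2.2, q.2.2.2.2.2))
  · intro q hq
    simp only [Finset.coe_filter, Set.mem_ofPred_eq] at hq
    obtain ⟨g1, g2, g3, -⟩ := hU q hq.1
    obtain ⟨c1, c2, c3, c4, c5, c6, c7, c8⟩ := hf q q0 (hq.2.trans hq0.2.symm)
    rw [c1, c2, c3, c4, c5, c6, c7, c8] at g3
    simp only [Finset.coe_filter, Set.mem_ofPred_eq, Finset.mem_product]
    exact ⟨⟨g1, g2⟩, g3⟩
  · intro q hq q' hq' h
    simp only [Finset.coe_filter, Set.mem_ofPred_eq] at hq hq'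
    obtain ⟨c1, c2, c3, c4, c5, c6, c7, c8⟩ := hf q q' (hq.2.trans hq'.2.symm)
    simp only [Prod.mk.injEq] at h
    ext <;> simp [*]

set_option maxHeartbeats 1000000 in
lemma count_bound (p : ℕ) [Fact p.Prime] (lam : ZMod p) (a b a' b' h κ : ℤ)
    (hp : 2 ≤ p) (ha : 1 ≤ a) (hb : b ≤ p - 1) (ha' : 1 ≤ a') (hb' : b' ≤ p - 1) (hab : a ≤ b) (hab' : a' ≤ b')
    (hM : (b + 1 - a) * (b' + 1 - a') ≤ p) (hh : 1 ≤ h) (hh' : h ≤ p - 1) (hhh : h * h ≤ p) (hκ : 0 ≤ κ)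
    (U : Finset ((ℤ × ℤ × ℤ × ℤ × ℤ) × (ℤ × ℤ × ℤ × ℤ × ℤ)))
    (hU : ∀ q ∈ U, q.1.2.2.2.2 ∈ Finset.Icc 1 κ ∧ q.2.2.2.2.2 ∈ Finset.Icc 1 κ ∧
      (q.1.2.2.2.2 : ZMod p) * (((q.1.1 : ZMod p) - lam * (q.1.2.1 : ZMod p)) *
                ((q.1.2.2.1 : ZMod p) - lam * (q.1.2.2.2.1 : ZMod p))) =
              (q.2.2.2.2.2 : ZMod p) * (((q.2.1 : ZMod p) - lam * (q.2.2.1 : ZMod p)) *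
                ((q.2.2.2.1 : ZMod p) - lam * (q.2.2.2.2.1 : ZMod p))) ∧
      ((q.1.1 : ZMod p) - lam * (q.1.2.1 : ZMod p)) *
                ((q.1.2.2.1 : ZMod p) - lam * (q.1.2.2.2.1 : ZMod p)) ≠ 0)
    (hU' : ∀ q ∈ U,
      (((q.1.1, q.1.2.1), (q.2.1, q.2.2.1)) ∈ prs p (Finset.Icc a b) (Finset.Icc a' b') (Finset.Icc a b) (Finset.Icc a' b') ∧
       ((q.1.2.2.1, q.1.2.2.2.1), (q.2.2.2.1, q.2.2.2.2.1)) ∈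
          prs p (Finset.Icc 1 h) (Finset.Icc 1 h) (Finset.Icc 1 h) (Finset.Icc 1 h)) ∨
      (((q.1.1, q.1.2.1), (q.2.2.2.1, q.2.2.2.2.1)) ∈ prs p (Finset.Icc a b) (Finset.Icc a' b') (Finset.Icc 1 h) (Finset.Icc 1 h) ∧
       ((q.2.1, q.2.2.1), (q.1.2.2.1, q.1.2.2.2.1)) ∈
          prs p (Finset.Icc a b) (Finset.Icc a' b') (Finset.Icc 1 h) (Finset.Icc 1 h))) :
    (U.card : ℝ) ≤ 2 * (((((Finset.Icc a b).card : ℝ) * ((Finset.Icc a' b').card : ℝ)) *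
        (1 + 8 * (1 + Real.log p) ^ 2)) * ((h : ℝ) * h * (1 + 8 * (1 + Real.log p) ^ 2))) *
        (((κ : ℝ) / p + 1) * κ) := by
  classical
  set A := Finset.Icc a b with hA
  set B := Finset.Icc a' b' with hB
  set T := Finset.Icc 1 h with hT
  set L := 1 + 8 * (1 + Real.log p) ^ 2 with hL
  have cT : (T.card : ℝ) = h := by
    have : (T.card : ℤ) = h := by rw [hT, Int.card_Icc]; omega
    exact_mod_cast this
  have en1 := energy p a b a' b' ha hb ha' hb' hab hab' hM
  have en2 := energy p 1 h 1 h le_rfl hh' le_rfl hh' hh hh (by ring_nf; nlinarith)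
  rw [← hT, cT, ← hL] at en2
  rw [← hA, ← hB, ← hL] at en1
  set D := (κ.toNat / p + 1) * κ.toNat with hD
  have c1 : ((prs p A B A B).card : ℝ) ≤ A.card * B.card * L := by
    refine (prs_card p A B A B).trans (le_trans (le_of_eq ?_) en1)
    simp only [sq]
  have c2 : ((prs p T T T T).card : ℝ) ≤ h * h * L := by
    refine (prs_card p T T T T).trans (le_trans (le_of_eq ?_) en2)
    simp only [sq]
  have c3 : ((prs p A B T T).card : ℝ) ^ 2 ≤ (A.card * B.card * L) * (h * h * L) := by
    calc ((prs p A B T T).card : ℝ) ^ 2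
        ≤ (∑ l : ZMod p, ((rep p A B l).card : ℝ) * ((rep p T T l).card : ℝ)) ^ 2 := by
          gcongr; exact prs_card p A B T T
      _ ≤ _ := Finset.sum_mul_sq_le_sq_mul_sq _ _ _
      _ ≤ _ := mul_le_mul en1 en2 (Finset.sum_nonneg (fun l _ => sq_nonneg _))
          (le_trans (Finset.sum_nonneg (fun l _ => sq_nonneg _)) en1)
  set U1 := U.filter (fun q => ((q.1.1, q.1.2.1), (q.2.1, q.2.2.1)) ∈ prs p A B A B ∧
       ((q.1.2.2.1, q.1.2.2.2.1), (q.2.2.2.1, q.2.2.2.2.1)) ∈ prs p T T T T) with hU1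
  set U2 := U.filter (fun q => ((q.1.1, q.1.2.1), (q.2.2.2.1, q.2.2.2.2.1)) ∈ prs p A B T T ∧
       ((q.2.1, q.2.2.1), (q.1.2.2.1, q.1.2.2.2.1)) ∈ prs p A B T T) with hU2
  have hsub : U ⊆ U1 ∪ U2 := by
    intro q hq
    rcases hU' q hq with h1 | h1
    · exact Finset.mem_union_left _ (Finset.mem_filter.2 ⟨hq, h1⟩)
    · exact Finset.mem_union_right _ (Finset.mem_filter.2 ⟨hq, h1⟩)
  have b1 : U1.card ≤ D * ((prs p A B A B) ×ˢ (prs p T T T T)).card := by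
    apply fib_bound p lam κ U1 (fun q hq => hU q (Finset.mem_filter.1 hq).1) _
      (fun q => (((q.1.1, q.1.2.1), (q.2.1, q.2.2.1)), ((q.1.2.2.1, q.1.2.2.2.1), (q.2.2.2.1, q.2.2.2.2.1))))
    · intro q q' hqq
      simp only [Prod.mk.injEq] at hqq
      obtain ⟨⟨⟨h1, h2⟩, h3, h4⟩, ⟨h5, h6⟩, h7, h8⟩ := hqq
      exact ⟨h1, h2, h5, h6, h3, h4, h7, h8⟩
    · intro q hq
      exact Finset.mem_product.2 (Finset.mem_filter.1 hq).2
  have b2 : U2.card ≤ D * ((prs p A B T T) ×ˢ (prs p A B T T)).card := by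
    apply fib_bound p lam κ U2 (fun q hq => hU q (Finset.mem_filter.1 hq).1) _
      (fun q => (((q.1.1, q.1.2.1), (q.2.2.2.1, q.2.2.2.2.1)), ((q.2.1, q.2.2.1), (q.1.2.2.1, q.1.2.2.2.1))))
    · intro q q' hqq
      simp only [Prod.mk.injEq] at hqq
      obtain ⟨⟨⟨h1, h2⟩, h3, h4⟩, ⟨h5, h6⟩, h7, h8⟩ := hqq
      exact ⟨h1, h2, h7, h8, h5, h6, h3, h4⟩
    · intro q hq
      exact Finset.mem_product.2 (Finset.mem_filter.1 hq).2
  have hcard : U.card ≤ D * ((prs p A B A B).card * (prs p T T T T).card +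
      (prs p A B T T).card ^ 2) := by
    have := (Finset.card_le_card hsub).trans (Finset.card_union_le _ _)
    rw [Finset.card_product] at b1 b2
    rw [mul_add, sq]
    omega
  have hDr : (D : ℝ) ≤ ((κ : ℝ) / p + 1) * κ := by
    have e1 : ((κ.toNat : ℕ) : ℝ) = (κ : ℝ) := by
      have : ((κ.toNat : ℤ) : ℝ) = (κ : ℝ) := by rw [Int.toNat_of_nonneg hκ]
      exact_mod_cast this
    have hκr : (0 : ℝ) ≤ κ := by exact_mod_cast hκ
    rw [hD]
    push_cast
    rw [e1]
    gcongr
    rw [← e1]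
    exact Nat.cast_div_le
  have hL0 : 0 ≤ L := by positivity
  have hκr : (0 : ℝ) ≤ κ := by exact_mod_cast hκ
  have hhr : (0 : ℝ) ≤ h := by exact_mod_cast (by linarith : (0 : ℤ) ≤ h)
  calc (U.card : ℝ) ≤ D * (((prs p A B A B).card : ℝ) * (prs p T T T T).card +
      ((prs p A B T T).card : ℝ) ^ 2) := by exact_mod_cast hcard
    _ ≤ (((κ : ℝ) / p + 1) * κ) * ((A.card * B.card * L) * (h * h * L) + (A.card * B.card * L) * (h * h * L)) := by
      gcongr
    _ = _ := by ring

set_option maxHeartbeats 1000000 in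
/-- the energy `E(R, T, S)` bound: the number of 10-tuples
`(x, y, x₀, y₀, s, x', y', x₀', y₀', s')` with `x, x' ∈ I`, `y, y' ∈ J`,
`x₀, y₀, x₀', y₀' ∈ I₀ = [1, p^{3/8}/4]`, `s, s' ∈ K = [1, p^{3/(2k)}]` and
`s(x − μy)(x₀ − μy₀) = s'(x' − μy')(x₀' − μy₀')` for `μ ∈ {λ₁, ω₂, ω₃}`,
all factors nonzero, is at most
`exp(c log p / log log p) · p^{3/k} · (|I||J|)^{2 − 1/k}`. -/
theorem stmt11 (k : ℕ) (hk : 1 ≤ k) :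
    ∃ c : ℝ, 0 < c ∧ ∃ p₀ : ℕ, ∀ (p : ℕ) [Fact p.Prime], p₀ < p →
      ∀ (E : Type) [Field E] [Fintype E] [Algebra (ZMod p) E], Fintype.card E = p ^ 2 →
      ∀ (lam₁ lam₂ lam₃ : ZMod p) (ω₂ ω₃ : E),
        Irreducible (X ^ 2 + C lam₂ * X + C lam₃ : Polynomial (ZMod p)) →
        ω₂ ^ 2 + algebraMap (ZMod p) E lam₂ * ω₂ + algebraMap (ZMod p) E lam₃ = 0 →
        ω₃ ^ 2 + algebraMap (ZMod p) E lam₂ * ω₃ + algebraMap (ZMod p) E lam₃ = 0 →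
        ω₂ ≠ ω₃ →
      ∀ a₁ b₁ a₂ b₂ : ℤ,
        Finset.Icc a₁ b₁ ⊆ Finset.Icc 1 ((p : ℤ) - 1) →
        Finset.Icc a₂ b₂ ⊆ Finset.Icc 1 ((p : ℤ) - 1) →
        (p : ℝ) ^ ((3 : ℝ) / 8) ≤ ((Finset.Icc a₁ b₁).card : ℝ) →
        ((Finset.Icc a₁ b₁).card : ℝ) < (p : ℝ) ^ ((1 : ℝ) / 2) →
        (p : ℝ) ^ ((3 : ℝ) / 8) ≤ ((Finset.Icc a₂ b₂).card : ℝ) →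
        ((Finset.Icc a₂ b₂).card : ℝ) < (p : ℝ) ^ ((1 : ℝ) / 2) →
        (Nat.card {q : (ℤ × ℤ × ℤ × ℤ × ℤ) × (ℤ × ℤ × ℤ × ℤ × ℤ) //
            q.1.1 ∈ Finset.Icc a₁ b₁ ∧ q.1.2.1 ∈ Finset.Icc a₂ b₂ ∧
            q.1.2.2.1 ∈ Finset.Icc (1 : ℤ) ⌊(p : ℝ) ^ ((3 : ℝ) / 8) / 4⌋ ∧
            q.1.2.2.2.1 ∈ Finset.Icc (1 : ℤ) ⌊(p : ℝ) ^ ((3 : ℝ) / 8) / 4⌋ ∧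
            q.1.2.2.2.2 ∈ Finset.Icc (1 : ℤ) ⌊(p : ℝ) ^ ((3 : ℝ) / (2 * (k : ℝ)))⌋ ∧
            q.2.1 ∈ Finset.Icc a₁ b₁ ∧ q.2.2.1 ∈ Finset.Icc a₂ b₂ ∧
            q.2.2.2.1 ∈ Finset.Icc (1 : ℤ) ⌊(p : ℝ) ^ ((3 : ℝ) / 8) / 4⌋ ∧
            q.2.2.2.2.1 ∈ Finset.Icc (1 : ℤ) ⌊(p : ℝ) ^ ((3 : ℝ) / 8) / 4⌋ ∧
            q.2.2.2.2.2 ∈ Finset.Icc (1 : ℤ) ⌊(p : ℝ) ^ ((3 : ℝ) / (2 * (k : ℝ)))⌋ ∧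
            (q.1.2.2.2.2 : ZMod p) ≠ 0 ∧ (q.2.2.2.2.2 : ZMod p) ≠ 0 ∧
            -- μ = λ₁, in F_p
            (q.1.2.2.2.2 : ZMod p) * ((q.1.1 : ZMod p) - lam₁ * (q.1.2.1 : ZMod p)) *
                ((q.1.2.2.1 : ZMod p) - lam₁ * (q.1.2.2.2.1 : ZMod p)) =
              (q.2.2.2.2.2 : ZMod p) * ((q.2.1 : ZMod p) - lam₁ * (q.2.2.1 : ZMod p)) *
                ((q.2.2.2.1 : ZMod p) - lam₁ * (q.2.2.2.2.1 : ZMod p)) ∧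
            (q.1.1 : ZMod p) - lam₁ * (q.1.2.1 : ZMod p) ≠ 0 ∧
            (q.1.2.2.1 : ZMod p) - lam₁ * (q.1.2.2.2.1 : ZMod p) ≠ 0 ∧
            (q.2.1 : ZMod p) - lam₁ * (q.2.2.1 : ZMod p) ≠ 0 ∧
            (q.2.2.2.1 : ZMod p) - lam₁ * (q.2.2.2.2.1 : ZMod p) ≠ 0 ∧
            -- μ = ω₂, in F_{p²}
            (q.1.2.2.2.2 : E) * ((q.1.1 : E) - ω₂ * (q.1.2.1 : E)) *
                ((q.1.2.2.1 : E) - ω₂ * (q.1.2.2.2.1 : E)) =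
              (q.2.2.2.2.2 : E) * ((q.2.1 : E) - ω₂ * (q.2.2.1 : E)) *
                ((q.2.2.2.1 : E) - ω₂ * (q.2.2.2.2.1 : E)) ∧
            (q.1.1 : E) - ω₂ * (q.1.2.1 : E) ≠ 0 ∧
            (q.1.2.2.1 : E) - ω₂ * (q.1.2.2.2.1 : E) ≠ 0 ∧
            (q.2.1 : E) - ω₂ * (q.2.2.1 : E) ≠ 0 ∧
            (q.2.2.2.1 : E) - ω₂ * (q.2.2.2.2.1 : E) ≠ 0 ∧
            -- μ = ω₃, in F_{p²}
            (q.1.2.2.2.2 : E) * ((q.1.1 : E) - ω₃ * (q.1.2.1 : E)) *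
                ((q.1.2.2.1 : E) - ω₃ * (q.1.2.2.2.1 : E)) =
              (q.2.2.2.2.2 : E) * ((q.2.1 : E) - ω₃ * (q.2.2.1 : E)) *
                ((q.2.2.2.1 : E) - ω₃ * (q.2.2.2.2.1 : E)) ∧
            (q.1.1 : E) - ω₃ * (q.1.2.1 : E) ≠ 0 ∧
            (q.1.2.2.1 : E) - ω₃ * (q.1.2.2.2.1 : E) ≠ 0 ∧
            (q.2.1 : E) - ω₃ * (q.2.2.1 : E) ≠ 0 ∧
            (q.2.2.2.1 : E) - ω₃ * (q.2.2.2.2.1 : E) ≠ 0} : ℝ)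
          ≤ Real.exp (c * Real.log p / Real.log (Real.log p)) *
              (p : ℝ) ^ ((3 : ℝ) / (k : ℝ)) *
              (((Finset.Icc a₁ b₁).card : ℝ) * ((Finset.Icc a₂ b₂).card : ℝ)) ^
                (2 - 1 / (k : ℝ)) := by
  obtain ⟨p₀, hp256, hev⟩ := ev_log k hk
  refine ⟨1, one_pos, p₀, ?_⟩
  intro p hpf hp E _ _ _ hcardE lam₁ lam₂ lam₃ ω₂ ω₃ hirr hw2 hw3 hne a₁ b₁ a₂ b₂ hI hJ hI1 hI2 hJ1 hJ2
  have hLp := hev p hp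
  have hpn : 256 < p := lt_of_le_of_lt hp256 hp
  have hpr : (256 : ℝ) < p := by exact_mod_cast hpn
  have hp0 : (0 : ℝ) < p := by linarith
  have hp1 : (1 : ℝ) ≤ p := by linarith
  have hk0 : (0 : ℝ) < k := by exact_mod_cast hk
  have hpow : (0 : ℝ) < (p : ℝ) ^ ((3 : ℝ) / 8) := by positivity
  have hab₁ : a₁ ≤ b₁ := by
    by_contra hcon
    rw [Finset.Icc_eq_empty hcon] at hI1
    simp at hI1
    linarith
  have hab₂ : a₂ ≤ b₂ := by
    by_contra hcon
    rw [Finset.Icc_eq_empty hcon] at hJ1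
    simp at hJ1
    linarith
  obtain ⟨ha₁, hb₁⟩ := (Finset.Icc_subset_Icc_iff hab₁).1 hI
  obtain ⟨ha₂, hb₂⟩ := (Finset.Icc_subset_Icc_iff hab₂).1 hJ
  have cA : ((Finset.Icc a₁ b₁).card : ℤ) = b₁ + 1 - a₁ := by rw [Int.card_Icc]; omega
  have cB : ((Finset.Icc a₂ b₂).card : ℤ) = b₂ + 1 - a₂ := by rw [Int.card_Icc]; omega
  have hM : (b₁ + 1 - a₁) * (b₂ + 1 - a₂) ≤ p := by
    rw [← cA, ← cB]
    have h1 : ((Finset.Icc a₁ b₁).card : ℝ) * ((Finset.Icc a₂ b₂).card : ℝ) ≤ p := by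
      calc _ ≤ (p : ℝ) ^ ((1 : ℝ) / 2) * (p : ℝ) ^ ((1 : ℝ) / 2) := by gcongr
        _ = p := by rw [← Real.rpow_add hp0]; norm_num
    exact_mod_cast h1
  have hN : (p : ℝ) ^ ((3 : ℝ) / 4) ≤
      ((Finset.Icc a₁ b₁).card : ℝ) * ((Finset.Icc a₂ b₂).card : ℝ) := by
    calc (p : ℝ) ^ ((3 : ℝ) / 4) = (p : ℝ) ^ ((3 : ℝ) / 8) * (p : ℝ) ^ ((3 : ℝ) / 8) := by
          rw [← Real.rpow_add hp0]; norm_num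
      _ ≤ _ := by gcongr
  obtain ⟨h, hh⟩ : ∃ h : ℤ, h = ⌊(p : ℝ) ^ ((3 : ℝ) / 8) / 4⌋ := ⟨_, rfl⟩
  obtain ⟨κ, hκ⟩ : ∃ κ : ℤ, κ = ⌊(p : ℝ) ^ ((3 : ℝ) / (2 * (k : ℝ)))⌋ := ⟨_, rfl⟩
  rw [← hh, ← hκ]
  have hhr : (h : ℝ) ≤ (p : ℝ) ^ ((3 : ℝ) / 8) / 4 := by rw [hh]; exact Int.floor_le _
  have hκr : (κ : ℝ) ≤ (p : ℝ) ^ ((3 : ℝ) / (2 * (k : ℝ))) := by rw [hκ]; exact Int.floor_le _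
  have hκ0 : 0 ≤ κ := by rw [hκ]; apply Int.floor_nonneg.2; positivity
  have hh1 : 1 ≤ h := by
    rw [hh, Int.le_floor]
    have : (256 : ℝ) ^ ((3 : ℝ) / 8) ≤ (p : ℝ) ^ ((3 : ℝ) / 8) := by gcongr
    have e : (256 : ℝ) ^ ((3 : ℝ) / 8) = 8 := by
      rw [show (256 : ℝ) = 2 ^ (8 : ℝ) by norm_num, ← Real.rpow_mul (by norm_num)]
      norm_num
    push_cast
    linarith
  have hhs : (p : ℝ) ^ ((3 : ℝ) / 8) ≤ p := by
    calc _ ≤ (p : ℝ) ^ (1 : ℝ) := Real.rpow_le_rpow_of_exponent_le hp1 (by norm_num)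
      _ = p := Real.rpow_one _
  have hh2 : h ≤ p - 1 := by
    have : (h : ℝ) ≤ (p : ℝ) - 1 := by linarith
    exact_mod_cast this
  have hh0r : (0 : ℝ) ≤ h := by exact_mod_cast (by linarith : (0 : ℤ) ≤ h)
  have hhh : h * h ≤ p := by
    have h1 : (h : ℝ) * h ≤ p := by
      calc (h : ℝ) * h ≤ ((p : ℝ) ^ ((3 : ℝ) / 8)) * ((p : ℝ) ^ ((3 : ℝ) / 8)) := by
            gcongr <;> linarith
        _ = (p : ℝ) ^ ((3 : ℝ) / 4) := by rw [← Real.rpow_add hp0]; norm_num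
        _ ≤ (p : ℝ) ^ (1 : ℝ) := Real.rpow_le_rpow_of_exponent_le hp1 (by norm_num)
        _ = p := Real.rpow_one _
    exact_mod_cast h1
  have hexp : 1 ≤ Real.exp (1 * Real.log p / Real.log (Real.log p)) := by
    apply Real.one_le_exp
    have h1 : 1 ≤ Real.log p := by
      rw [Real.le_log_iff_exp_le hp0]
      have := Real.exp_one_lt_d9
      linarith
    have h2 : 0 ≤ Real.log (Real.log p) := Real.log_nonneg h1
    positivity
  have hfin := final_ineq k hk p _ (1 + 8 * (1 + Real.log p) ^ 2) h κ hp1 hN hLp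
    (by exact_mod_cast hκ0) hκr hh0r hhr
  have hrhs : (p : ℝ) ^ ((3 : ℝ) / (k : ℝ)) *
      (((Finset.Icc a₁ b₁).card : ℝ) * ((Finset.Icc a₂ b₂).card : ℝ)) ^ (2 - 1 / (k : ℝ)) ≤
      Real.exp (1 * Real.log p / Real.log (Real.log p)) * (p : ℝ) ^ ((3 : ℝ) / (k : ℝ)) *
      (((Finset.Icc a₁ b₁).card : ℝ) * ((Finset.Icc a₂ b₂).card : ℝ)) ^ (2 - 1 / (k : ℝ)) := by
    rw [mul_assoc]
    apply le_mul_of_one_le_left _ hexp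
    positivity
  refine le_trans ?_ hrhs
  refine le_trans ?_ hfin
  classical
  set A := Finset.Icc a₁ b₁ with hA
  set B := Finset.Icc a₂ b₂ with hB
  set T := Finset.Icc (1 : ℤ) h with hT
  set K := Finset.Icc (1 : ℤ) κ with hK
  set G : Finset ((ℤ × ℤ × ℤ × ℤ × ℤ) × (ℤ × ℤ × ℤ × ℤ × ℤ)) :=
    (A ×ˢ B ×ˢ T ×ˢ T ×ˢ K) ×ˢ (A ×ˢ B ×ˢ T ×ˢ T ×ˢ K) with hG
  have hncA : ∀ y ∈ A, (y : ZMod p) ≠ 0 := by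
    intro y hy
    rw [hA, Finset.mem_Icc] at hy
    exact icast_ne (by linarith) (by rw [abs_lt]; constructor <;> linarith)
  have hncB : ∀ y ∈ B, (y : ZMod p) ≠ 0 := by
    intro y hy
    rw [hB, Finset.mem_Icc] at hy
    exact icast_ne (by linarith) (by rw [abs_lt]; constructor <;> linarith)
  have hncT : ∀ y ∈ T, (y : ZMod p) ≠ 0 := by
    intro y hy
    rw [hT, Finset.mem_Icc] at hy
    exact icast_ne (by linarith) (by rw [abs_lt]; constructor <;> linarith)
  have hcast : ∀ z : ℤ, (z : E) = algebraMap (ZMod p) E (z : ZMod p) := fun z => by simp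
  set Pr : ((ℤ × ℤ × ℤ × ℤ × ℤ) × (ℤ × ℤ × ℤ × ℤ × ℤ)) → Prop := fun q =>
      ((q.1.2.2.2.2 : ZMod p) * (((q.1.1 : ZMod p) - lam₁ * (q.1.2.1 : ZMod p)) *
                ((q.1.2.2.1 : ZMod p) - lam₁ * (q.1.2.2.2.1 : ZMod p))) =
              (q.2.2.2.2.2 : ZMod p) * (((q.2.1 : ZMod p) - lam₁ * (q.2.2.1 : ZMod p)) *
                ((q.2.2.2.1 : ZMod p) - lam₁ * (q.2.2.2.2.1 : ZMod p))) ∧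
      ((q.1.1 : ZMod p) - lam₁ * (q.1.2.1 : ZMod p)) *
                ((q.1.2.2.1 : ZMod p) - lam₁ * (q.1.2.2.2.1 : ZMod p)) ≠ 0) ∧
      ((((q.1.1, q.1.2.1), (q.2.1, q.2.2.1)) ∈ prs p A B A B ∧
       ((q.1.2.2.1, q.1.2.2.2.1), (q.2.2.2.1, q.2.2.2.2.1)) ∈ prs p T T T T) ∨
      (((q.1.1, q.1.2.1), (q.2.2.2.1, q.2.2.2.2.1)) ∈ prs p A B T T ∧
       ((q.2.1, q.2.2.1), (q.1.2.2.1, q.1.2.2.2.1)) ∈ prs p A B T T)) with hPr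
  have hcount := count_bound p lam₁ a₁ b₁ a₂ b₂ h κ (by omega) ha₁ hb₁ ha₂ hb₂ hab₁ hab₂ hM hh1 hh2 hhh
    hκ0 (G.filter Pr)
    (by
      intro q hq
      rw [Finset.mem_filter, hG] at hq
      obtain ⟨hq1, hq2, -⟩ := hq
      simp only [Finset.mem_product] at hq1
      exact ⟨hq1.1.2.2.2.2, hq1.2.2.2.2.2, hq2⟩)
    (by
      intro q hq
      exact (Finset.mem_filter.1 hq).2.2)
  refine le_trans ?_ hcount

  rw [Nat.cast_le, ← Fintype.card_coe, ← Nat.card_eq_fintype_card]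
  refine Nat.card_le_card_of_injective (Subtype.map id ?_) (Subtype.map_injective _ Function.injective_id)
  rintro ⟨⟨x, y, x0, y0, s⟩, ⟨x', y', x0', y0', s'⟩⟩ ⟨m1, m2, m3, m4, m5, m6, m7, m8, m9, m10, hs, hs',
    e1, n1, n2, n3, n4, e2, -, -, -, -, e3, -, -, -, -⟩
  simp only at m1 m2 m3 m4 m5 m6 m7 m8 m9 m10 hs hs' e1 n1 n2 n3 n4 e2 e3
  simp only [id]
  rw [Finset.mem_filter]
  refine ⟨?_, ⟨?_, mul_ne_zero n1 n2⟩, ?_⟩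
  · simp only [hG, Finset.mem_product]
    exact ⟨⟨m1, m2, m3, m4, m5⟩, m6, m7, m8, m9, m10⟩
  · linear_combination e1
  · simp only [hcast] at e2 e3
    rcases alg_key p E lam₁ lam₂ lam₃ ω₂ ω₃ hirr hw2 hw3 hne x y x0 y0 s x' y' x0' y0' s' hs
      (hncB y m2) (hncT y0 m4) (hncB y' m7) (hncT y0' m9) e1 e2 e3 with ⟨g1, g2⟩ | ⟨g1, g2⟩
    · left
      exact ⟨mem_prs p A B A B x y x' y' m1 m2 m6 m7 (hncB y m2) g1,
        mem_prs p T T T T x0 y0 x0' y0' m3 m4 m8 m9 (hncT y0 m4) g2⟩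
    · right
      exact ⟨mem_prs p A B T T x y x0' y0' m1 m2 m8 m9 (hncB y m2) g1,
        mem_prs p A B T T x' y' x0 y0 m6 m7 m3 m4 (hncB y' m7) g2⟩
end
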